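/- arXiv:1311.1488 — 2 statements merged into one kernel-verified Lean document; each statement's English description precedes it below -/
import Mathlib

section
/- Fix an integer ℓ ≥ 1 and define R'(n) = 0 for integers n ≤ 0 and, inductively, R'(n+1) = max( R'(n), sup_{t ∈ [0, 1/ℓ)} ( R'(n−ℓ) + ξ_{(n+1)/ℓ − t} ) ). Then for every integer n ≥ 0, R'(n) ≤ R_ξ(n/ℓ). -/
open MeasureTheory Real Filter Set

noncomputable section

/-- Auxiliary construction of the stairs functional: `stairsAux ξ n` agrees with `R_ξ` on
`(-∞, n]`; on `(n-1, n]` it is given by the defining recursion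
`R_ξ(t) = sup_{s ∈ [0,1]} (R_ξ(t−s−1) + ξ(t−s))`. -/
def stairsAux (ξ : ℝ → ℝ) : ℕ → ℝ → ℝ
  | 0, _ => 0
  | n + 1, t =>
    if t ≤ n then stairsAux ξ n t
    else ⨆ s : Set.Icc (0 : ℝ) 1, (stairsAux ξ n (t - (s : ℝ) - 1) + ξ (t - (s : ℝ)))

/-- The stairs functional `R_ξ`: `R_ξ(t) = 0` for `t ≤ 0` and, inductively for `t ∈ (n, n+1]`,
`R_ξ(t) = sup_{s ∈ [0,1]} (R_ξ(t−s−1) + ξ(t−s))`. -/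
def stairs (ξ : ℝ → ℝ) (t : ℝ) : ℝ :=
  stairsAux ξ ⌈t⌉₊ t

/-- The discretised process `R'` of Statement 13: `R'(n) = 0` for `n ≤ 0` and
`R'(n+1) = max(R'(n), sup_{t ∈ [0,1/ℓ)} (R'(n−ℓ) + ξ((n+1)/ℓ − t)))`
(with truncated subtraction realising the convention `R'(k) = 0` for `k ≤ 0`). -/
def dspCont (ℓ : ℕ) (ξ : ℝ → ℝ) : ℕ → ℝ
  | 0 => 0
  | n + 1 =>
    max (dspCont ℓ ξ n)
      (⨆ t : Set.Ico (0 : ℝ) (1 / ℓ),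
        (dspCont ℓ ξ (n - ℓ) + ξ (((n : ℝ) + 1) / ℓ - (t : ℝ))))

theorem sA_nonneg (ξ : ℝ → ℝ) (hξ0 : ∀ t, 0 ≤ ξ t) (n : ℕ) (t : ℝ) : 0 ≤ stairsAux ξ n t := by
  induction n generalizing t with
  | zero => simp [stairsAux]
  | succ n ih =>
    rw [stairsAux]
    split_ifs
    · exact ih t
    · exact Real.iSup_nonneg fun s => add_nonneg (ih _) (hξ0 _)

theorem sA_stable (ξ : ℝ → ℝ) (m : ℕ) (t : ℝ) (ht : t ≤ m) (k : ℕ) :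
    stairsAux ξ (m + k) t = stairsAux ξ m t := by
  induction k with
  | zero => rfl
  | succ k ih =>
    rw [← add_assoc, stairsAux, if_pos, ih]
    push_cast
    have : (0 : ℝ) ≤ k := k.cast_nonneg
    linarith

theorem sA_eq (ξ : ℝ → ℝ) (n : ℕ) (t : ℝ) (ht : t ≤ n) : stairsAux ξ n t = stairs ξ t := by
  obtain ⟨k, rfl⟩ := Nat.exists_eq_add_of_le (Nat.ceil_le.2 ht)
  exact sA_stable ξ _ t (Nat.le_ceil t) k

theorem st_nonneg (ξ : ℝ → ℝ) (hξ0 : ∀ t, 0 ≤ ξ t) (t : ℝ) : 0 ≤ stairs ξ t :=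
  sA_nonneg ξ hξ0 _ _

theorem st_zero (ξ : ℝ → ℝ) (t : ℝ) (ht : t ≤ 0) : stairs ξ t = 0 := by
  rw [← sA_eq ξ 0 t (by simpa using ht)]; rfl

theorem st_rec (ξ : ℝ → ℝ) (t : ℝ) (ht : 0 < t) :
    stairs ξ t = ⨆ s : Set.Icc (0 : ℝ) 1, (stairs ξ (t - (s : ℝ) - 1) + ξ (t - (s : ℝ))) := by
  obtain ⟨n, hn⟩ : ∃ n, ⌈t⌉₊ = n + 1 := Nat.exists_eq_succ_of_ne_zero (Nat.ceil_pos.2 ht).ne'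
  have h1 : t ≤ (n + 1 : ℕ) := hn ▸ Nat.le_ceil t
  have h2 : ¬ t ≤ n := by
    intro h
    have := Nat.ceil_le.2 h
    omega
  rw [← sA_eq ξ (n + 1) t h1, stairsAux, if_neg h2]
  congr 1
  ext s
  rw [sA_eq]
  have := s.2.1
  push_cast at h1
  linarith

theorem xi_bdd (ξ : ℝ → ℝ) (hξneg : ∀ t ≤ (0 : ℝ), ξ t = 0)
    (hξfin : ∀ a : ℝ, 0 < a → ∀ b c : ℝ, {t | t ∈ Set.Icc b c ∧ a ≤ ξ t}.Finite) (T : ℝ) :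
    ∃ M, 0 ≤ M ∧ ∀ t ≤ T, ξ t ≤ M := by
  obtain ⟨M, hM⟩ := ((hξfin 1 one_pos 0 T).image ξ).bddAbove
  refine ⟨max M 1, by positivity, fun t ht => ?_⟩
  by_cases h : 1 ≤ ξ t
  · refine le_max_of_le_left (hM ⟨t, ⟨⟨?_, ht⟩, h⟩, rfl⟩)
    by_contra h'
    rw [hξneg t (by linarith)] at h
    linarith
  · exact le_max_of_le_right (by linarith)

theorem sA_le (ξ : ℝ → ℝ) (T M : ℝ) (hM0 : 0 ≤ M) (hM : ∀ t ≤ T, ξ t ≤ M) (n : ℕ) (t : ℝ)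
    (ht : t ≤ T) : stairsAux ξ n t ≤ n * M := by
  induction n generalizing t with
  | zero => simp [stairsAux]
  | succ n ih =>
    rw [stairsAux]
    push_cast
    split_ifs
    · linarith [ih t ht]
    · haveI : Nonempty (Set.Icc (0 : ℝ) 1) := ⟨⟨0, by simp⟩⟩
      refine ciSup_le fun s => ?_
      have := s.2.1
      linarith [ih (t - s - 1) (by linarith), hM (t - s) (by linarith)]

theorem st_ge (ξ : ℝ → ℝ) (hξ0 : ∀ t, 0 ≤ ξ t) (hξneg : ∀ t ≤ (0 : ℝ), ξ t = 0)
    (hξfin : ∀ a : ℝ, 0 < a → ∀ b c : ℝ, {t | t ∈ Set.Icc b c ∧ a ≤ ξ t}.Finite)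
    (t u : ℝ) (h1 : t - 1 ≤ u) (h2 : u ≤ t) : stairs ξ (u - 1) + ξ u ≤ stairs ξ t := by
  rcases le_or_gt t 0 with ht | ht
  · rw [st_zero ξ (u - 1) (by linarith), hξneg u (by linarith), st_zero ξ t ht]; simp
  rw [st_rec ξ t ht]
  obtain ⟨M, hM0, hM⟩ := xi_bdd ξ hξneg hξfin t
  have hb : BddAbove (Set.range fun s : Set.Icc (0 : ℝ) 1 =>
      (stairs ξ (t - (s : ℝ) - 1) + ξ (t - (s : ℝ)))) := by
    refine ⟨⌈t⌉₊ * M + M, ?_⟩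
    rintro _ ⟨s, rfl⟩
    have := s.2.1
    have h := Nat.le_ceil t
    have h3 := sA_le ξ t M hM0 hM ⌈t⌉₊ (t - s - 1) (by linarith)
    rw [sA_eq _ _ _ (by linarith)] at h3
    exact add_le_add h3 (hM _ (by linarith))
  have := le_ciSup hb ⟨t - u, by constructor <;> linarith⟩
  simpa using this

theorem st_mono (ξ : ℝ → ℝ) (hξ0 : ∀ t, 0 ≤ ξ t) (hξneg : ∀ t ≤ (0 : ℝ), ξ t = 0)
    (hξfin : ∀ a : ℝ, 0 < a → ∀ b c : ℝ, {t | t ∈ Set.Icc b c ∧ a ≤ ξ t}.Finite)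
    (n : ℕ) (t t' : ℝ) (h : t ≤ t') (hn : t' ≤ n) : stairs ξ t ≤ stairs ξ t' := by
  induction n generalizing t t' with
  | zero =>
    rw [st_zero ξ t (by push_cast at hn; linarith)]
    exact st_nonneg ξ hξ0 _
  | succ n ih =>
    push_cast at hn
    rcases le_or_gt t 0 with ht | ht
    · rw [st_zero ξ t ht]; exact st_nonneg ξ hξ0 _
    rw [st_rec ξ t ht]
    haveI : Nonempty (Set.Icc (0 : ℝ) 1) := ⟨⟨0, by simp⟩⟩
    refine ciSup_le fun s => ?_
    have hs := s.2.1
    rcases le_or_gt (t' - 1) (t - s) with h1 | h1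
    · exact st_ge ξ hξ0 hξneg hξfin t' (t - s) h1 (by linarith)
    · have a1 := st_ge ξ hξ0 hξneg hξfin (t - s) (t - s) (by linarith) le_rfl
      have a2 := ih (t - s) (t' - 1) h1.le (by linarith)
      have a3 := st_ge ξ hξ0 hξneg hξfin t' t' (by linarith) le_rfl
      linarith [hξ0 t']

/-- for `ℓ ≥ 1`, the discretised process is dominated by the stairs
functional: `R'(n) ≤ R_ξ(n/ℓ)` for every `n ≥ 0`. -/
theorem stmt_13 (ξ : ℝ → ℝ) (hξ0 : ∀ t, 0 ≤ ξ t) (hξneg : ∀ t ≤ (0 : ℝ), ξ t = 0)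
    (hξfin : ∀ a : ℝ, 0 < a → ∀ b c : ℝ, {t | t ∈ Set.Icc b c ∧ a ≤ ξ t}.Finite)
    (ℓ : ℕ) (hℓ : 1 ≤ ℓ) (n : ℕ) :
    dspCont ℓ ξ n ≤ stairs ξ ((n : ℝ) / ℓ) := by
  have mono : ∀ t t' : ℝ, t ≤ t' → stairs ξ t ≤ stairs ξ t' := fun t t' h =>
    st_mono ξ hξ0 hξneg hξfin ⌈t'⌉₊ t t' h (Nat.le_ceil _)
  have hl : (1 : ℝ) ≤ ℓ := by exact_mod_cast hℓ
  have hl0 : (0 : ℝ) < ℓ := by linarith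
  induction n using Nat.strong_induction_on with
  | _ n ih =>
  cases n with
  | zero => rw [dspCont]; exact st_nonneg ξ hξ0 _
  | succ n =>
    rw [dspCont]
    push_cast
    have hd : ((n : ℝ) + 1) / ℓ = n / ℓ + 1 / ℓ := add_div _ _ _
    have hp : (0 : ℝ) < 1 / ℓ := by positivity
    have hp1 : (1 : ℝ) / ℓ ≤ 1 := by rw [div_le_one hl0]; exact hl
    refine max_le ((ih n (by omega)).trans (mono _ _ (by linarith))) ?_
    haveI : Nonempty (Set.Ico (0 : ℝ) (1 / ℓ)) := ⟨⟨0, le_rfl, hp⟩⟩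
    refine ciSup_le fun t => ?_
    have t1 := t.2.1
    have t2 := t.2.2
    have key := st_ge ξ hξ0 hξneg hξfin (((n : ℝ) + 1) / ℓ) (((n : ℝ) + 1) / ℓ - t)
      (by linarith) (by linarith)
    refine le_trans (add_le_add_left ?_ _) key
    rcases le_or_gt ℓ n with h | h
    · refine (ih (n - ℓ) (by omega)).trans (mono _ _ ?_)
      rw [Nat.cast_sub h, sub_div, div_self hl0.ne']
      linarith
    · rw [Nat.sub_eq_zero_of_le h.le, dspCont]
      exact st_nonneg ξ hξ0 _

end
end

section
/- Assume α = 1 and E[X] < ∞. Then, as N → ∞, v_N ~ (c_N / log₂ N) · ∫₁^∞ h(c_N)/h(c_N x) dx, i.e. the ratio of the two sides tends to 1. -/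
open MeasureTheory ProbabilityTheory Real Filter Set

noncomputable section

/-- One step of the `N`-BRW: each of the `N` particles branches into two, the children jump
according to `jump`, and only the `N` right-most particles are kept; the result is the
sorted (ascending) vector of the `N` retained positions. -/
def brwStep (N : ℕ) (pos : Fin N → ℝ) (jump : Fin N → Fin 2 → ℝ) : Fin N → ℝ := fun i =>
  (((Finset.univ : Finset (Fin N × Fin 2)).val.map fun p => pos p.1 + jump p.1 p.2).sort
      (· ≤ ·)).getD (N + i) 0

/-- The `N`-BRW started from the sorted configuration `x0`, driven by the jumps `jump`:
`brw N x0 jump n i` is the position `X_{i+1}(n)` of the `(i+1)`-th lowest particle at time `n`. -/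
def brw (N : ℕ) (x0 : Fin N → ℝ) (jump : ℕ → Fin N → Fin 2 → ℝ) : ℕ → Fin N → ℝ
  | 0 => x0
  | n + 1 => brwStep N (brw N x0 jump n) (jump n)

/-- Position `X_N(n)` of the right-most particle of the `N`-BRW started at the origin. -/
def brwMax (N : ℕ) (jump : ℕ → Fin N → Fin 2 → ℝ) (n : ℕ) : ℝ :=
  ⨆ i, brw N (fun _ => 0) jump n i

/-- Position `X_1(n)` of the left-most particle of the `N`-BRW started at the origin. -/
def brwMin (N : ℕ) (jump : ℕ → Fin N → Fin 2 → ℝ) (n : ℕ) : ℝ :=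
  ⨅ i, brw N (fun _ => 0) jump n i

/-- The tail `P(X > x) = 1/h(x)` of the random variable `X` under `P`. -/
def tail {Ω : Type*} [MeasurableSpace Ω] (P : Measure Ω) (X : Ω → ℝ) (x : ℝ) : ℝ :=
  (P {ω | x < X ω}).toReal

/-- Generalized inverse `h⁻¹(y)` of `h(x) = 1 / P(X > x)`. -/
def hinv {Ω : Type*} [MeasurableSpace Ω] (P : Measure Ω) (X : Ω → ℝ) (y : ℝ) : ℝ :=
  sInf {x : ℝ | 0 ≤ x ∧ tail P X x ≤ y⁻¹}

/-- The scaling sequence `c_N = h⁻¹(2 N log₂ N)`. -/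
def cN {Ω : Type*} [MeasurableSpace Ω] (P : Measure Ω) (X : Ω → ℝ) (N : ℕ) : ℝ :=
  hinv P X (2 * N * Real.logb 2 N)

/-! ### Deterministic facts on one step -/

lemma list_sorted_getD (x : ℝ) : ∀ (l : List ℝ), l.Pairwise (· ≤ ·) → ∀ k, k < l.length →
    (x ≤ l.getD k 0 ↔ l.countP (fun y => decide (y < x)) ≤ k) := by
  intro l
  induction l with
  | nil => intro _ k hk; simp at hk
  | cons a l ih =>
    intro hs k hk
    rw [List.pairwise_cons] at hs
    obtain ⟨ha, hs⟩ := hs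
    by_cases hax : a < x
    · rw [List.countP_cons_of_pos (by simpa using hax)]
      cases k with
      | zero => simp; exact hax
      | succ k =>
        have := ih hs k (by simpa using hk)
        simp only [List.getD_cons_succ]
        rw [this]; omega
    · push Not at hax
      have h0 : l.countP (fun y => decide (y < x)) = 0 := by
        rw [List.countP_eq_zero]
        intro b hb
        have := ha b hb
        simp; linarith
      rw [List.countP_cons_of_neg (by simpa using hax), h0]
      cases k with
      | zero => simp; exact hax
      | succ k =>
        have := ih hs k (by simpa using hk)
        simp only [List.getD_cons_succ]
        rw [this, h0]; omega

lemma le_brwStep_iff (N : ℕ) (pos : Fin N → ℝ) (jump : Fin N → Fin 2 → ℝ) (i : Fin N) (x : ℝ) :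
    x ≤ brwStep N pos jump i ↔
      (Finset.univ.filter fun p : Fin N × Fin 2 => pos p.1 + jump p.1 p.2 < x).card ≤ N + i := by
  unfold brwStep
  have hlen : (((Finset.univ : Finset (Fin N × Fin 2)).val.map
      fun p => pos p.1 + jump p.1 p.2).sort (· ≤ ·)).length = N * 2 := by
    simp
  rw [list_sorted_getD _ _ (Multiset.pairwise_sort _ _) _ (by rw [hlen]; omega)]
  rw [← Multiset.coe_countP, Multiset.sort_eq, Multiset.countP_map]
  rfl

lemma sum_brwStep_le (N : ℕ) (pos : Fin N → ℝ) (jump : Fin N → Fin 2 → ℝ) (f : ℝ → ℝ)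
    (hf : ∀ x, 0 ≤ f x) :
    ∑ i, f (brwStep N pos jump i) ≤ ∑ p : Fin N × Fin 2, f (pos p.1 + jump p.1 p.2) := by
  unfold brwStep
  set s : Multiset ℝ := (Finset.univ : Finset (Fin N × Fin 2)).val.map
      fun p => pos p.1 + jump p.1 p.2 with hs
  set l := s.sort (· ≤ ·) with hl
  have hlen : l.length = N * 2 := by simp [hl, hs]
  have h1 : ∑ p : Fin N × Fin 2, f (pos p.1 + jump p.1 p.2) = (l.map f).sum := by
    have : (s.map f).sum = (l.map f).sum := by
      rw [← Multiset.sum_coe, ← Multiset.map_coe, hl, Multiset.sort_eq]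
    rw [← this, hs, Multiset.map_map]; rfl
  have h2 : (l.map f).sum = ∑ k ∈ Finset.range (N * 2), f (l.getD k 0) := by
    rw [← hlen]
    clear_value l
    clear h1 hlen hl
    induction l with
    | nil => simp
    | cons a l ih => 
      rw [List.length_cons, Finset.sum_range_succ']
      simp only [List.map_cons, List.sum_cons, List.getD_cons_succ, List.getD_cons_zero, ih]
      ring
  rw [h1, h2, Fin.sum_univ_eq_sum_range (fun k => f (l.getD (N + k) 0)) N,
    mul_two, Finset.sum_range_add]
  have : 0 ≤ ∑ k ∈ Finset.range N, f (l.getD k 0) := Finset.sum_nonneg fun k _ => hf _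
  linarith

lemma exists_le_brwStep (N : ℕ) (pos : Fin N → ℝ) (jump : Fin N → Fin 2 → ℝ) (i : Fin N) :
    ∃ p : Fin N × Fin 2, brwStep N pos jump i ≤ pos p.1 + jump p.1 p.2 := by
  by_contra! h
  have := (le_brwStep_iff N pos jump i _).1 le_rfl
  rw [Finset.filter_true_of_mem (fun p _ => h p)] at this
  simp at this
  omega

lemma count_brwStep (N : ℕ) (pos : Fin N → ℝ) (jump : Fin N → Fin 2 → ℝ) (x : ℝ) (r : ℕ)
    (hrN : r ≤ N)
    (hr : r ≤ (Finset.univ.filter fun p : Fin N × Fin 2 => x ≤ pos p.1 + jump p.1 p.2).card) :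
    r ≤ (Finset.univ.filter fun i => x ≤ brwStep N pos jump i).card := by
  have h1 : (Finset.univ.filter fun p : Fin N × Fin 2 => pos p.1 + jump p.1 p.2 < x).card
      + (Finset.univ.filter fun p : Fin N × Fin 2 => x ≤ pos p.1 + jump p.1 p.2).card = N * 2 := by
    have := Finset.card_filter_add_card_filter_not (s := (Finset.univ : Finset (Fin N × Fin 2)))
      (fun p : Fin N × Fin 2 => pos p.1 + jump p.1 p.2 < x)
    simpa using this
  have h2 : (Finset.univ.filter fun i : Fin N => N - r ≤ (i : ℕ)).card = r := by
    have := Finset.card_filter_add_card_filter_not (s := (Finset.univ : Finset (Fin N)))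
      (fun i : Fin N => (i:ℕ) < N - r)
    rw [Fin.card_filter_val_lt] at this
    simp only [not_lt, Finset.card_univ, Fintype.card_fin] at this
    omega
  calc r = _ := h2.symm
    _ ≤ _ := by
      apply Finset.card_le_card
      intro i hi
      simp only [Finset.mem_filter, Finset.mem_univ, true_and] at hi ⊢
      rw [le_brwStep_iff]
      omega

lemma count_double (N : ℕ) (pos : Fin N → ℝ) (jump : Fin N → Fin 2 → ℝ) (x : ℝ)
    (hj : ∀ i j, 0 ≤ jump i j) :
    2 * (Finset.univ.filter fun i => x ≤ pos i).card ≤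
      (Finset.univ.filter fun p : Fin N × Fin 2 => x ≤ pos p.1 + jump p.1 p.2).card := by
  have : (Finset.univ.filter fun i => x ≤ pos i).card * 2 =
      ((Finset.univ.filter fun i => x ≤ pos i) ×ˢ (Finset.univ : Finset (Fin 2))).card := by
    simp
  rw [mul_comm, this]
  apply Finset.card_le_card
  rintro ⟨i, j⟩ hi
  simp only [Finset.mem_product, Finset.mem_filter, Finset.mem_univ, true_and, and_true] at hi ⊢
  linarith [hj i j]

section det
variable {N : ℕ} {x0 : Fin N → ℝ} {jump : ℕ → Fin N → Fin 2 → ℝ}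

lemma count_growth (hj : ∀ k i j, 0 ≤ jump k i j) (x : ℝ) (n : ℕ) (i : Fin N) (j : Fin 2)
    (h : x ≤ brw N x0 jump n i + jump n i j) (t : ℕ) :
    min N (2 ^ t) ≤ (Finset.univ.filter fun i => x ≤ brw N x0 jump (n + 1 + t) i).card := by
  induction t with
  | zero =>
    have hN : 1 ≤ N := by have := i.2; omega
    simp only [add_zero, pow_zero]
    rw [min_eq_right hN]
    apply count_brwStep _ _ _ _ _ hN
    apply Finset.card_pos.2
    exact ⟨(i, j), by simpa using h⟩
  | succ t ih =>
    apply count_brwStep _ _ _ _ _ (min_le_left _ _)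
    have := count_double N (brw N x0 jump (n + 1 + t)) (jump (n + 1 + t)) x (hj _)
    refine le_trans ?_ this
    rw [pow_succ]
    omega

lemma all_ge_succ (hj : ∀ k i j, 0 ≤ jump k i j) (x : ℝ) (n : ℕ)
    (h : ∀ i, x ≤ brw N x0 jump n i) (i : Fin N) : x ≤ brw N x0 jump (n + 1) i := by
  show x ≤ brwStep N _ _ i
  rw [le_brwStep_iff, Finset.filter_false_of_mem]
  · simp
  · intro p _
    have := h p.1
    have := hj n p.1 p.2
    linarith

lemma all_ge_add (hj : ∀ k i j, 0 ≤ jump k i j) (x : ℝ) (n : ℕ)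
    (h : ∀ i, x ≤ brw N x0 jump n i) (t : ℕ) (i : Fin N) : x ≤ brw N x0 jump (n + t) i := by
  induction t generalizing i with
  | zero => exact h i
  | succ t ih => exact all_ge_succ hj x _ ih i

lemma big_jump (hj : ∀ k i j, 0 ≤ jump k i j) (x : ℝ) (n k T m : ℕ) (hT : N ≤ 2 ^ T)
    (h : ∀ i, x ≤ brw N x0 jump n i) (hnk : n ≤ k) (hkm : k + 1 + T ≤ m) (i : Fin N) (j : Fin 2)
    (i' : Fin N) : x + jump k i j ≤ brw N x0 jump m i' := by
  obtain ⟨s, rfl⟩ := Nat.exists_eq_add_of_le hnk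
  obtain ⟨u, rfl⟩ := Nat.exists_eq_add_of_le hkm
  apply all_ge_add hj
  have h1 := all_ge_add hj x n h s i
  have h2 := count_growth hj (x + jump (n + s) i j) (n + s) i j (by linarith) T
  rw [min_eq_left hT] at h2
  have h3 : (Finset.univ.filter fun i' => x + jump (n + s) i j ≤ brw N x0 jump (n + s + 1 + T) i')
      = Finset.univ := by
    apply Finset.eq_univ_of_card
    apply le_antisymm (Finset.card_le_univ _)
    simpa using h2
  intro i''
  have : i'' ∈ (Finset.univ : Finset (Fin N)) := Finset.mem_univ _
  rw [← h3] at this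
  exact (Finset.mem_filter.1 this).2

end det

section det0
variable {N : ℕ} {jump : ℕ → Fin N → Fin 2 → ℝ}

lemma brwMin_le (n : ℕ) (i : Fin N) : brwMin N jump n ≤ brw N (fun _ => 0) jump n i :=
  ciInf_le (Set.finite_range _).bddBelow i

lemma le_brwMax (n : ℕ) (i : Fin N) : brw N (fun _ => 0) jump n i ≤ brwMax N jump n :=
  le_ciSup (f := fun i => brw N (fun _ => 0) jump n i) (Set.finite_range _).bddAbove i

lemma brwMin_step (hN : 1 ≤ N) (hj : ∀ k i j, 0 ≤ jump k i j) (n k T m : ℕ) (hT : N ≤ 2 ^ T)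
    (hnk : n ≤ k) (hkm : k + 1 + T ≤ m) (i : Fin N) (j : Fin 2) :
    brwMin N jump n + jump k i j ≤ brwMin N jump m := by
  haveI : Nonempty (Fin N) := ⟨i⟩
  exact le_ciInf fun i' => big_jump hj _ n k T m hT (fun i => brwMin_le n i) hnk hkm i j i'

lemma brwMin_mono (hN : 1 ≤ N) (hj : ∀ k i j, 0 ≤ jump k i j) (n m : ℕ) (h : n ≤ m) :
    brwMin N jump n ≤ brwMin N jump m := by
  haveI : Nonempty (Fin N) := ⟨⟨0, hN⟩⟩
  obtain ⟨s, rfl⟩ := Nat.exists_eq_add_of_le h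
  exact le_ciInf fun i' => all_ge_add hj _ n (fun i => brwMin_le n i) s i'

lemma brw_nonneg (hj : ∀ k i j, 0 ≤ jump k i j) (n : ℕ) (i : Fin N) :
    0 ≤ brw N (fun _ => 0) jump n i := by
  have := all_ge_add (x0 := fun _ => 0) hj 0 0 (fun i => le_rfl) n i
  simpa using this

lemma brw_le_sum (hj : ∀ k i j, 0 ≤ jump k i j) (n : ℕ) (i : Fin N) :
    brw N (fun _ => 0) jump n i ≤ ∑ k ∈ Finset.range n, ∑ i, ∑ j, jump k i j := by
  induction n generalizing i with
  | zero => simp [brw]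
  | succ n ih =>
    obtain ⟨p, hp⟩ := exists_le_brwStep N (brw N (fun _ => 0) jump n) (jump n) i
    rw [Finset.sum_range_succ]
    have h1 : jump n p.1 p.2 ≤ ∑ j, jump n p.1 j :=
      Finset.single_le_sum (f := fun j => jump n p.1 j) (fun j _ => hj _ _ _) (Finset.mem_univ _)
    have h2 : ∑ j, jump n p.1 j ≤ ∑ i, ∑ j, jump n i j :=
      Finset.single_le_sum (f := fun i => ∑ j, jump n i j)
        (fun i _ => Finset.sum_nonneg fun j _ => hj _ _ _) (Finset.mem_univ _)
    have := ih p.1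
    exact hp.trans (by linarith)

end det0

/-! ### Measurability -/

lemma measurable_brwStep {Ω : Type*} {m : MeasurableSpace Ω} {N : ℕ} {pos : Fin N → Ω → ℝ}
    {jump : Fin N → Fin 2 → Ω → ℝ} (hp : ∀ i, Measurable (pos i))
    (hj : ∀ i j, Measurable (jump i j)) (i : Fin N) :
    Measurable fun ω => brwStep N (fun i => pos i ω) (fun i j => jump i j ω) i := by
  apply measurable_of_Ici
  intro x
  have : ((fun ω => brwStep N (fun i => pos i ω) (fun i j => jump i j ω) i) ⁻¹' Set.Ici x) =
    {ω | (∑ p : Fin N × Fin 2, if pos p.1 ω + jump p.1 p.2 ω < x then 1 else 0) ≤ N + (i : ℕ)} := by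
    ext ω
    simp only [Set.mem_preimage, Set.mem_Ici, Set.mem_setOf_eq]
    rw [le_brwStep_iff, Finset.card_filter]
  rw [this]
  apply measurableSet_le _ measurable_const
  apply Finset.measurable_sum
  intro p _
  exact Measurable.ite (measurableSet_lt ((hp _).add (hj _ _)) measurable_const)
    measurable_const measurable_const

lemma measurable_brw {Ω : Type*} {m : MeasurableSpace Ω} {N : ℕ}
    {ζ : ℕ → Fin N → Fin 2 → Ω → ℝ} (n : ℕ) (hj : ∀ k < n, ∀ i j, Measurable (ζ k i j))
    (i : Fin N) :
    Measurable fun ω => brw N (fun _ => 0) (fun k i j => ζ k i j ω) n i := by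
  induction n generalizing i with
  | zero => exact measurable_const
  | succ n ih =>
    exact measurable_brwStep (pos := fun i ω => brw N (fun _ => 0) (fun k i j => ζ k i j ω) n i)
      (fun i => ih (fun k hk => hj k (by omega)) i) (hj n (by omega)) i

/-! ### Lower bound on the speed -/

/-- `x` if `x > A`, else `0`. -/
def bigv (A x : ℝ) : ℝ := if A < x then x else 0
/-- `1` if `x > A`, else `0`. -/
def bigI (A x : ℝ) : ℝ := if A < x then 1 else 0

lemma measurable_bigv (A : ℝ) : Measurable (bigv A) :=
  Measurable.ite measurableSet_Ioi measurable_id measurable_const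

lemma measurable_bigI (A : ℝ) : Measurable (bigI A) :=
  Measurable.ite measurableSet_Ioi measurable_const measurable_const

lemma bigv_nonneg {A x : ℝ} (hx : 0 ≤ x) : 0 ≤ bigv A x := by
  unfold bigv; split_ifs <;> simp [hx]

lemma bigv_le {A x : ℝ} (hx : 0 ≤ x) : bigv A x ≤ x := by
  unfold bigv; split_ifs <;> simp [hx]

lemma bigI_nonneg {A x : ℝ} : 0 ≤ bigI A x := by
  unfold bigI; split_ifs <;> simp

lemma bigI_le {A x : ℝ} : bigI A x ≤ 1 := by
  unfold bigI; split_ifs <;> simp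

lemma comb_bound {ι : Type*} [DecidableEq ι] (S : Finset ι) (z : ι → ℝ) (A u : ℝ)
    (hz0 : ∀ p, 0 ≤ z p) (hz : ∀ p ∈ S, z p ≤ u) (hu : 0 ≤ u) :
    ∑ p ∈ S, (bigv A (z p) - ∑ q ∈ S.erase p, bigv A (z p) * bigI A (z q)) ≤ u := by
  by_cases h : ∀ r ∈ S, ∃ q ∈ S.erase r, A < z q
  · refine le_trans (Finset.sum_nonpos fun r hr => ?_) hu
    obtain ⟨q, hq, hqA⟩ := h r hr
    have h1 : bigv A (z r) * bigI A (z q) ≤ ∑ q ∈ S.erase r, bigv A (z r) * bigI A (z q) :=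
      Finset.single_le_sum (f := fun q => bigv A (z r) * bigI A (z q))
        (fun q _ => mul_nonneg (bigv_nonneg (hz0 _)) bigI_nonneg) hq
    have h2 : bigI A (z q) = 1 := by simp [bigI, hqA]
    rw [h2, mul_one] at h1
    linarith
  · push Not at h
    obtain ⟨r, hr, h⟩ := h
    rw [← Finset.add_sum_erase _ _ hr]
    have h1 : ∑ p ∈ S.erase r,
        (bigv A (z p) - ∑ q ∈ S.erase p, bigv A (z p) * bigI A (z q)) ≤ 0 := by
      refine Finset.sum_nonpos fun p hp => ?_
      have : bigv A (z p) = 0 := by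
        simp [bigv, h p hp]
      simp [this]
    have h2 : 0 ≤ ∑ q ∈ S.erase r, bigv A (z r) * bigI A (z q) :=
      Finset.sum_nonneg fun q _ => mul_nonneg (bigv_nonneg (hz0 _)) bigI_nonneg
    have h3 := bigv_le (A := A) (hz0 r)
    have h4 := hz r hr
    linarith

section prob
variable {Ω : Type*} [MeasurableSpace Ω] {P : Measure Ω} [IsProbabilityMeasure P]
    {X : Ω → ℝ} {N : ℕ} {ζ : ℕ → Fin N → Fin 2 → Ω → ℝ} {v : ℝ}

lemma integral_bigI (hXmeas : Measurable X) (A : ℝ) : ∫ ω, bigI A (X ω) ∂P = tail P X A := by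
  have : (fun ω => bigI A (X ω)) = Set.indicator {ω | A < X ω} 1 := by
    ext ω
    simp [bigI, Set.indicator_apply]
  rw [this, integral_indicator_one (measurableSet_lt measurable_const hXmeas)]
  rfl

lemma integrable_bigv {Y : Ω → ℝ} (hmeas : Measurable Y) (hpos : ∀ ω, 0 ≤ Y ω)
    (hInteg : Integrable Y P) (A : ℝ) :
    Integrable (fun ω => bigv A (Y ω)) P := by
  refine hInteg.mono' ((measurable_bigv A).comp hmeas).aestronglyMeasurable (ae_of_all _ fun ω => ?_)
  rw [Real.norm_eq_abs, abs_of_nonneg (bigv_nonneg (hpos ω))]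
  exact bigv_le (hpos ω)

lemma lower_block (hXmeas : Measurable X)
    (hXint : Integrable X P) (hN : 1 ≤ N)
    (hmeas : ∀ n i j, Measurable (ζ n i j))
    (hpos : ∀ n i j ω, 0 ≤ ζ n i j ω)
    (hdist : ∀ n i j, Measure.map (ζ n i j) P = Measure.map X P)
    (hindep : iIndepFun (fun p : ℕ × Fin N × Fin 2 => ζ p.1 p.2.1 p.2.2) P)
    (hintM : ∀ n, Integrable (fun ω => brwMin N (fun k i j => ζ k i j ω) n) P)
    (R T : ℕ) (hT : N ≤ 2 ^ T) (hTR : T ≤ R) (A : ℝ) (m : ℕ) (hm : m = (R - T) * (2 * N))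
    (b : ℕ) :
    b * (m * (∫ ω, bigv A (X ω) ∂P) * (1 - m * tail P X A)) ≤
      ∫ ω, brwMin N (fun k i j => ζ k i j ω) (b * R) ∂P := by
  have hid : ∀ n i j, IdentDistrib (ζ n i j) X P P := fun n i j =>
    ⟨(hmeas n i j).aemeasurable, hXmeas.aemeasurable, hdist n i j⟩
  induction b with
  | zero =>
    simp only [Nat.cast_zero, zero_mul]
    apply integral_nonneg
    intro ω
    exact Real.iInf_nonneg fun i => brw_nonneg (fun k i j => hpos k i j ω) _ _
  | succ b ih =>
    set e := ∫ ω, bigv A (X ω) ∂P with he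
    set S : Finset (ℕ × Fin N × Fin 2) :=
      (Finset.Ico (b * R) (b * R + (R - T))) ×ˢ Finset.univ with hS
    have hcard : S.card = m := by
      rw [hS, Finset.card_product]
      simp [hm, mul_comm]
    have hInteg : ∀ n i j, Integrable (ζ n i j) P := fun n i j => (hid n i j).integrable_iff.2 hXint
    have hbv : ∀ p : ℕ × Fin N × Fin 2, Integrable (fun ω => bigv A (ζ p.1 p.2.1 p.2.2 ω)) P :=
      fun p => integrable_bigv (hmeas _ _ _) (hpos _ _ _) (hInteg _ _ _) A
    have hbve : ∀ p : ℕ × Fin N × Fin 2, ∫ ω, bigv A (ζ p.1 p.2.1 p.2.2 ω) ∂P = e :=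
      fun p => ((hid p.1 p.2.1 p.2.2).comp (measurable_bigv A)).integral_eq
    have hbIe : ∀ p : ℕ × Fin N × Fin 2, ∫ ω, bigI A (ζ p.1 p.2.1 p.2.2 ω) ∂P = tail P X A :=
      fun p => (((hid p.1 p.2.1 p.2.2).comp (measurable_bigI A)).integral_eq).trans
        (integral_bigI hXmeas A)
    have hbI : ∀ p : ℕ × Fin N × Fin 2, Integrable (fun ω => bigI A (ζ p.1 p.2.1 p.2.2 ω)) P := by
      intro p
      refine (integrable_const (1:ℝ)).mono'
        ((measurable_bigI A).comp (hmeas _ _ _)).aestronglyMeasurable (ae_of_all _ fun ω => ?_)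
      rw [Real.norm_eq_abs, abs_of_nonneg bigI_nonneg]
      exact bigI_le
    have hind : ∀ p q : ℕ × Fin N × Fin 2, p ≠ q →
        IndepFun (fun ω => bigv A (ζ p.1 p.2.1 p.2.2 ω)) (fun ω => bigI A (ζ q.1 q.2.1 q.2.2 ω)) P :=
      fun p q hpq => (hindep.indepFun hpq).comp (measurable_bigv A) (measurable_bigI A)
    have hprod : ∀ p q : ℕ × Fin N × Fin 2, p ≠ q →
        Integrable (fun ω => bigv A (ζ p.1 p.2.1 p.2.2 ω) * bigI A (ζ q.1 q.2.1 q.2.2 ω)) P :=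
      fun p q hpq => (hind p q hpq).integrable_mul (hbv p) (hbI q)
    have hprode : ∀ p q : ℕ × Fin N × Fin 2, p ≠ q →
        ∫ ω, bigv A (ζ p.1 p.2.1 p.2.2 ω) * bigI A (ζ q.1 q.2.1 q.2.2 ω) ∂P = e * tail P X A := by
      intro p q hpq
      rw [← hbve p, ← hbIe q]
      exact (hind p q hpq).integral_mul_eq_mul_integral (hbv p).aestronglyMeasurable
        (hbI q).aestronglyMeasurable
    set G : Ω → ℝ := fun ω => ∑ p ∈ S, (bigv A (ζ p.1 p.2.1 p.2.2 ω) -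
      ∑ q ∈ S.erase p, bigv A (ζ p.1 p.2.1 p.2.2 ω) * bigI A (ζ q.1 q.2.1 q.2.2 ω)) with hG
    have hsumI : ∀ p ∈ S, Integrable (fun ω => ∑ q ∈ S.erase p,
        bigv A (ζ p.1 p.2.1 p.2.2 ω) * bigI A (ζ q.1 q.2.1 q.2.2 ω)) P := fun p _ =>
      integrable_finsetSum _ fun q hq => hprod p q (Finset.ne_of_mem_erase hq).symm
    have hGint : Integrable G P :=
      integrable_finsetSum _ fun p hp => (hbv p).sub (hsumI p hp)
    have hGe : m * e * (1 - m * tail P X A) ≤ ∫ ω, G ω ∂P := by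
      have hGs : ∫ ω, G ω ∂P = ∑ p ∈ S, ∫ ω, (bigv A (ζ p.1 p.2.1 p.2.2 ω) -
          ∑ q ∈ S.erase p, bigv A (ζ p.1 p.2.1 p.2.2 ω) * bigI A (ζ q.1 q.2.1 q.2.2 ω)) ∂P :=
        integral_finsetSum _ (fun p hp => (hbv p).sub (hsumI p hp))
      rw [hGs]
      have : ∀ p ∈ S, e * (1 - m * tail P X A) ≤ ∫ ω, (bigv A (ζ p.1 p.2.1 p.2.2 ω) -
          ∑ q ∈ S.erase p, bigv A (ζ p.1 p.2.1 p.2.2 ω) * bigI A (ζ q.1 q.2.1 q.2.2 ω)) ∂P := by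
        intro p hp
        rw [integral_sub (hbv p) (hsumI p hp), hbve, integral_finsetSum _
          (fun q hq => hprod p q (Finset.ne_of_mem_erase hq).symm),
          Finset.sum_congr rfl (fun q hq => hprode p q (Finset.ne_of_mem_erase hq).symm),
          Finset.sum_const, nsmul_eq_mul]
        have h1 : ((S.erase p).card : ℝ) ≤ m := by
          rw [← hcard]; exact_mod_cast Finset.card_le_card (Finset.erase_subset _ _)
        have h2 : 0 ≤ e := by
          rw [← hbve p]; exact integral_nonneg fun ω => bigv_nonneg (hpos _ _ _ _)
        have h3 : 0 ≤ tail P X A := ENNReal.toReal_nonneg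
        have := mul_le_mul_of_nonneg_right h1 (mul_nonneg h2 h3)
        linarith
      have := Finset.card_nsmul_le_sum S _ _ this
      rw [hcard, nsmul_eq_mul] at this
      linarith
    have hstep : ∀ ω, brwMin N (fun k i j => ζ k i j ω) (b * R) + G ω ≤
        brwMin N (fun k i j => ζ k i j ω) ((b + 1) * R) := by
      intro ω
      have hj : ∀ k i j, 0 ≤ ζ k i j ω := fun k i j => hpos k i j ω
      have := comb_bound S (fun p => ζ p.1 p.2.1 p.2.2 ω) A
        (brwMin N (fun k i j => ζ k i j ω) ((b + 1) * R) - brwMin N (fun k i j => ζ k i j ω) (b * R))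
        (fun p => hj _ _ _) ?_ ?_
      · simp only [hG]; linarith
      · intro p hp
        rw [hS, Finset.mem_product, Finset.mem_Ico] at hp
        have := brwMin_step (jump := fun k i j => ζ k i j ω) hN hj (b * R) p.1 T ((b + 1) * R)
          hT hp.1.1 (by rw [add_mul]; omega) p.2.1 p.2.2
        linarith
      · have := brwMin_mono (jump := fun k i j => ζ k i j ω) hN hj (b * R) ((b + 1) * R)
          (Nat.mul_le_mul_right _ (by omega))
        linarith
    have := integral_mono ((hintM (b * R)).add hGint) (hintM ((b + 1) * R)) hstep
    simp only [Pi.add_apply] at this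
    rw [integral_add (hintM (b * R)) hGint] at this
    push_cast
    linarith

lemma measurable_brwMin (hmeas : ∀ n i j, Measurable (ζ n i j)) (n : ℕ) :
    Measurable (fun ω => brwMin N (fun k i j => ζ k i j ω) n) := by
  exact Measurable.iInf fun i => measurable_brw n (fun k _ => hmeas k) i

lemma measurable_brwMax (hmeas : ∀ n i j, Measurable (ζ n i j)) (n : ℕ) :
    Measurable (fun ω => brwMax N (fun k i j => ζ k i j ω) n) := by
  exact Measurable.iSup fun i => measurable_brw n (fun k _ => hmeas k) i

lemma lower_bound (hXmeas : Measurable X)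
    (hXint : Integrable X P) (hN : 1 ≤ N)
    (hmeas : ∀ n i j, Measurable (ζ n i j))
    (hpos : ∀ n i j ω, 0 ≤ ζ n i j ω)
    (hdist : ∀ n i j, Measure.map (ζ n i j) P = Measure.map X P)
    (hindep : iIndepFun (fun p : ℕ × Fin N × Fin 2 => ζ p.1 p.2.1 p.2.2) P)
    (hv : ∀ᵐ ω ∂P, Tendsto
        (fun n : ℕ => brwMin N (fun k i j => ζ k i j ω) n / n) atTop (nhds v))
    (R T : ℕ) (hR : 1 ≤ R) (hT : N ≤ 2 ^ T) (hTR : T ≤ R) (A : ℝ) (m : ℕ)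
    (hm : m = (R - T) * (2 * N)) :
    m * (∫ ω, bigv A (X ω) ∂P) * (1 - m * tail P X A) ≤ R * v := by
  have hid : ∀ n i j, IdentDistrib (ζ n i j) X P P := fun n i j =>
    ⟨(hmeas n i j).aemeasurable, hXmeas.aemeasurable, hdist n i j⟩
  have hInteg : ∀ n i j, Integrable (ζ n i j) P := fun n i j => (hid n i j).integrable_iff.2 hXint
  have : Nonempty (Fin N) := ⟨⟨0, hN⟩⟩
  set W : ℕ → Ω → ℝ := fun n ω => ∑ k ∈ Finset.range n, ∑ i, ∑ j, ζ k i j ω with hW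
  have hWint : ∀ n, Integrable (W n) P := fun n =>
    integrable_finsetSum _ fun k _ => integrable_finsetSum _ fun i _ =>
      integrable_finsetSum _ fun j _ => hInteg k i j
  set μ := ∫ ω, X ω ∂P with hμ
  have hWe : ∀ n, ∫ ω, W n ω ∂P = n * (N * (2 * μ)) := by
    intro n
    rw [hW]
    simp only
    rw [integral_finsetSum _ (fun k _ => integrable_finsetSum _ fun i _ =>
      integrable_finsetSum _ fun j _ => hInteg k i j)]
    have : ∀ k, ∫ ω, ∑ i, ∑ j, ζ k i j ω ∂P = N * (2 * μ) := by
      intro k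
      rw [integral_finsetSum _ (fun i _ => integrable_finsetSum _ fun j _ => hInteg k i j)]
      have : ∀ i, ∫ ω, ∑ j, ζ k i j ω ∂P = 2 * μ := by
        intro i
        rw [integral_finsetSum _ (fun j _ => hInteg k i j)]
        have : ∀ j, ∫ ω, ζ k i j ω ∂P = μ := fun j => (hid k i j).integral_eq
        simp [this]
      simp only [this]
      simp
    simp only [this]
    simp
  have hle : ∀ n ω, brwMin N (fun k i j => ζ k i j ω) n ≤ W n ω := fun n ω =>
    (brwMin_le n ⟨0, hN⟩).trans (brw_le_sum (fun k i j => hpos k i j ω) n _)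
  have hge : ∀ n ω, 0 ≤ brwMin N (fun k i j => ζ k i j ω) n := fun n ω =>
    Real.iInf_nonneg fun i => brw_nonneg (fun k i j => hpos k i j ω) _ _
  have hintM : ∀ n, Integrable (fun ω => brwMin N (fun k i j => ζ k i j ω) n) P := by
    intro n
    refine (hWint n).mono' (measurable_brwMin hmeas n).aestronglyMeasurable
      (ae_of_all _ fun ω => ?_)
    rw [Real.norm_eq_abs, abs_of_nonneg (hge n ω)]
    exact hle n ω
  set g := m * (∫ ω, bigv A (X ω) ∂P) * (1 - m * tail P X A) with hg
  have hblock := lower_block hXmeas hXint hN hmeas hpos hdist hindep hintM R T hT hTR A m hm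
  have hSL : ∀ᵐ ω ∂P, Tendsto (fun n : ℕ => W n ω / n) atTop (nhds (N * (2 * μ))) := by
    have h1 : ∀ i j, ∀ᵐ ω ∂P,
        Tendsto (fun n : ℕ => (∑ k ∈ Finset.range n, ζ k i j ω) / n) atTop (nhds μ) := by
      intro i j
      have := strong_law_ae_real (fun k => ζ k i j) (hInteg 0 i j)
        (fun k l hkl => hindep.indepFun (i := (k, i, j)) (j := (l, i, j))
          (by simpa using hkl)) (fun k => (hid k i j).trans (hid 0 i j).symm)
      rwa [(hid 0 i j).integral_eq] at this
    have h2 : ∀ᵐ ω ∂P, ∀ i j,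
        Tendsto (fun n : ℕ => (∑ k ∈ Finset.range n, ζ k i j ω) / n) atTop (nhds μ) := by
      rw [ae_all_iff]; intro i; rw [ae_all_iff]; exact h1 i
    filter_upwards [h2] with ω hω
    have h3 : Tendsto (fun n : ℕ => ∑ i : Fin N, ∑ j : Fin 2, (∑ k ∈ Finset.range n, ζ k i j ω) / n)
        atTop (nhds (∑ i : Fin N, ∑ j : Fin 2, μ)) :=
      tendsto_finsetSum _ fun i _ => tendsto_finsetSum _ fun j _ => hω i j
    have h4 : (∑ i : Fin N, ∑ j : Fin 2, μ) = N * (2 * μ) := by simp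
    rw [h4] at h3
    refine h3.congr fun n => ?_
    have h5 : W n ω = ∑ i : Fin N, ∑ j : Fin 2, ∑ k ∈ Finset.range n, ζ k i j ω := by
      simp only [hW]
      rw [Finset.sum_comm]
      exact Finset.sum_congr rfl fun i _ => Finset.sum_comm
    rw [h5, Finset.sum_div]
    refine Finset.sum_congr rfl fun i _ => ?_
    rw [Finset.sum_div]
  have hRpos : (0 : ℝ) < R := by exact_mod_cast hR
  set f : ℕ → Ω → ℝ := fun b ω => (W ((b + 1) * R) ω -
    brwMin N (fun k i j => ζ k i j ω) ((b + 1) * R)) / (((b + 1) * R : ℕ) : ℝ) with hf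
  have hf0 : ∀ b ω, 0 ≤ f b ω := fun b ω =>
    div_nonneg (sub_nonneg.2 (hle _ _)) (Nat.cast_nonneg _)
  have hfint : ∀ b, Integrable (f b) P := fun b =>
    ((hWint _).sub (hintM _)).div_const _
  have hfe : ∀ b, ∫ ω, f b ω ∂P ≤ N * (2 * μ) - g / R := by
    intro b
    rw [hf]
    simp only
    rw [integral_div, integral_sub (hWint _) (hintM _), hWe]
    have := hblock (b + 1)
    have hp : (0 : ℝ) < (((b + 1) * R : ℕ) : ℝ) := by
      push_cast; positivity
    rw [div_le_iff₀ hp]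
    have h5 : (N * (2 * μ) - g / R) * (((b + 1) * R : ℕ) : ℝ) =
      (((b + 1) * R : ℕ) : ℝ) * (N * (2 * μ)) - ((b + 1 : ℕ) : ℝ) * g := by
      push_cast; field_simp
    rw [h5]
    linarith
  have hlim : ∀ᵐ ω ∂P, Tendsto (fun b => f b ω) atTop (nhds (N * (2 * μ) - v)) := by
    filter_upwards [hSL, hv] with ω h1 h2
    have h3 := h1.sub h2
    have h4 : Tendsto (fun b : ℕ => (b + 1) * R) atTop atTop :=
      tendsto_atTop_mono (fun b => by simp only [id]; nlinarith) (tendsto_id (α := ℕ))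
    refine (h3.comp h4).congr fun b => ?_
    simp only [hf, Function.comp_def]
    rw [sub_div]
  have hfat := lintegral_liminf_le' (μ := P) (u := atTop) (f := fun b ω => ENNReal.ofReal (f b ω))
    (fun b => (hfint b).aestronglyMeasurable.aemeasurable.ennreal_ofReal)
  have hl : ∫⁻ ω, liminf (fun b => ENNReal.ofReal (f b ω)) atTop ∂P =
      ENNReal.ofReal (N * (2 * μ) - v) := by
    have hc : ∫⁻ _ : Ω, ENNReal.ofReal (N * (2 * μ) - v) ∂P = ENNReal.ofReal (N * (2 * μ) - v) := by
      simp
    rw [← hc]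
    apply lintegral_congr_ae
    filter_upwards [hlim] with ω hω
    exact ((ENNReal.continuous_ofReal.tendsto _).comp hω).liminf_eq
  rw [hl] at hfat
  have hr : liminf (fun b => ∫⁻ ω, ENNReal.ofReal (f b ω) ∂P) atTop ≤
      ENNReal.ofReal (N * (2 * μ) - g / R) := by
    refine liminf_le_of_frequently_le' (Frequently.of_forall fun b => ?_)
    rw [← ofReal_integral_eq_lintegral_ofReal (hfint b) (ae_of_all _ (hf0 b))]
    exact ENNReal.ofReal_le_ofReal (hfe b)
  have h0 : 0 ≤ N * (2 * μ) - g / R := (integral_nonneg (hf0 0)).trans (hfe 0)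
  have := (ENNReal.ofReal_le_ofReal_iff h0).1 (hfat.trans hr)
  have h6 : g / R ≤ v := by linarith
  rw [div_le_iff₀ hRpos] at h6
  linarith

end prob

/-! ### Upper bound on the speed -/

section probU
variable {Ω : Type*} [mΩ : MeasurableSpace Ω] {P : Measure Ω} [IsProbabilityMeasure P]
    {X : Ω → ℝ} {N : ℕ} {ζ : ℕ → Fin N → Fin 2 → Ω → ℝ} {v : ℝ}

/-- total of the jumps larger than `c` up to time `n` -/
def bigSum (N : ℕ) (c : ℝ) (jump : ℕ → Fin N → Fin 2 → ℝ) (n : ℕ) : ℝ :=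
  ∑ k ∈ Finset.range n, ∑ p : Fin N × Fin 2, bigv c (jump k p.1 p.2)

/-- `x` if `x ≤ c`, else `0`. -/
def smallv (c x : ℝ) : ℝ := x - bigv c x

lemma measurable_smallv (c : ℝ) : Measurable (smallv c) :=
  measurable_id.sub (measurable_bigv c)

/-- the exponential functional -/
def expFun (N : ℕ) (θ c : ℝ) (jump : ℕ → Fin N → Fin 2 → ℝ) (n : ℕ) : ℝ :=
  ∑ i, Real.exp (θ * (brw N (fun _ => 0) jump n i - bigSum N c jump n))

lemma expFun_succ (θ c : ℝ) (hθ : 0 ≤ θ) (jump : ℕ → Fin N → Fin 2 → ℝ)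
    (hj : ∀ k i j, 0 ≤ jump k i j) (n : ℕ) :
    expFun N θ c jump (n + 1) ≤ ∑ p : Fin N × Fin 2,
      Real.exp (θ * (brw N (fun _ => 0) jump n p.1 - bigSum N c jump n)) *
        Real.exp (θ * smallv c (jump n p.1 p.2)) := by
  have h1 := sum_brwStep_le N (brw N (fun _ => 0) jump n) (jump n)
    (fun y => Real.exp (θ * (y - bigSum N c jump (n + 1)))) (fun _ => (Real.exp_pos _).le)
  refine h1.trans (Finset.sum_le_sum fun p _ => ?_)
  rw [← Real.exp_add, ← mul_add]
  apply Real.exp_le_exp.2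
  apply mul_le_mul_of_nonneg_left _ hθ
  have h2 : bigSum N c jump (n + 1) = bigSum N c jump n +
      ∑ p : Fin N × Fin 2, bigv c (jump n p.1 p.2) := Finset.sum_range_succ _ _
  have h3 : bigv c (jump n p.1 p.2) ≤ ∑ p : Fin N × Fin 2, bigv c (jump n p.1 p.2) :=
    Finset.single_le_sum (f := fun p : Fin N × Fin 2 => bigv c (jump n p.1 p.2))
      (fun p _ => bigv_nonneg (hj _ _ _)) (Finset.mem_univ _)
  rw [h2]
  unfold smallv
  linarith

lemma measurable_bigSum {m : MeasurableSpace Ω} (c : ℝ) (n : ℕ)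
    (hj : ∀ k < n, ∀ i j, Measurable (ζ k i j)) :
    Measurable fun ω => bigSum N c (fun k i j => ζ k i j ω) n := by
  refine Finset.measurable_sum _ fun k hk => Finset.measurable_sum _ fun p _ => ?_
  exact (measurable_bigv c).comp (hj k (Finset.mem_range.1 hk) _ _)

lemma measurable_expFun (θ c : ℝ) (n : ℕ) (hmeas : ∀ n i j, Measurable (ζ n i j)) :
    Measurable fun ω => expFun N θ c (fun k i j => ζ k i j ω) n := by
  refine Finset.measurable_sum _ fun i _ => Real.measurable_exp.comp ?_
  exact ((measurable_brw n (fun k _ => hmeas k) i).sub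
    (measurable_bigSum c n (fun k _ => hmeas k))).const_mul θ

/-- the sigma-algebra generated by one jump -/
def jumpSigma (ζ : ℕ → Fin N → Fin 2 → Ω → ℝ) (p : ℕ × Fin N × Fin 2) : MeasurableSpace Ω :=
  MeasurableSpace.comap (ζ p.1 p.2.1 p.2.2) inferInstance

/-- the sigma-algebra generated by the jumps before time `n` -/
def pastSigma (ζ : ℕ → Fin N → Fin 2 → Ω → ℝ) (n : ℕ) : MeasurableSpace Ω :=
  ⨆ p ∈ {p : ℕ × Fin N × Fin 2 | p.1 < n}, jumpSigma ζ p

lemma lintegral_expFun (hXmeas : Measurable X)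
    (hmeas : ∀ n i j, Measurable (ζ n i j))
    (hpos : ∀ n i j ω, 0 ≤ ζ n i j ω)
    (hdist : ∀ n i j, Measure.map (ζ n i j) P = Measure.map X P)
    (hindep : iIndepFun (fun p : ℕ × Fin N × Fin 2 => ζ p.1 p.2.1 p.2.2) P)
    (θ c : ℝ) (hθ : 0 ≤ θ) (M : ℝ) (hM0 : 0 ≤ M)
    (hM : ∫⁻ ω, ENNReal.ofReal (Real.exp (θ * smallv c (X ω))) ∂P ≤ ENNReal.ofReal M) (n : ℕ) :
    ∫⁻ ω, ENNReal.ofReal (expFun N θ c (fun k i j => ζ k i j ω) n) ∂P ≤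
      ENNReal.ofReal (N * (2 * M) ^ n) := by
  induction n with
  | zero =>
    simp [expFun, brw, bigSum]
  | succ n ih =>
    set E : Fin N → Ω → ℝ := fun i ω => Real.exp (θ * (brw N (fun _ => 0)
      (fun k i j => ζ k i j ω) n i - bigSum N c (fun k i j => ζ k i j ω) n)) with hE
    set F : Fin N × Fin 2 → Ω → ℝ := fun p ω => Real.exp (θ * smallv c (ζ n p.1 p.2 ω)) with hF
    have hmsle : ∀ p, jumpSigma ζ p ≤ mΩ := fun p => (hmeas p.1 p.2.1 p.2.2).comap_le
    have hind : iIndep (jumpSigma ζ) P := hindep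
    have hm1le : (pastSigma ζ n) ≤ mΩ := iSup₂_le fun p _ => hmsle p
    have hmeas1 : ∀ k < n, ∀ i j, Measurable[(pastSigma ζ n)] (ζ k i j) := by
      intro k hk i j
      have h1 : jumpSigma ζ (k, i, j) ≤ (pastSigma ζ n) :=
        le_iSup₂_of_le (f := fun p (_ : p ∈ {p : ℕ × Fin N × Fin 2 | p.1 < n}) => jumpSigma ζ p)
          (k, i, j) hk le_rfl
      exact (comap_measurable (ζ k i j)).mono h1 le_rfl
    have hE1 : ∀ i, Measurable[(pastSigma ζ n)] (fun ω => ENNReal.ofReal (E i ω)) := by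
      intro i
      refine Measurable.ennreal_ofReal ?_
      refine Real.measurable_exp.comp ?_
      exact ((measurable_brw (m := (pastSigma ζ n)) n hmeas1 i).sub
        (measurable_bigSum (m := (pastSigma ζ n)) c n hmeas1)).const_mul θ
    have hEm : ∀ i, Measurable (fun ω => ENNReal.ofReal (E i ω)) := fun i =>
      (hE1 i).mono hm1le le_rfl
    have hprod : ∀ p : Fin N × Fin 2, ∫⁻ ω, ENNReal.ofReal (E p.1 ω * F p ω) ∂P ≤
        (∫⁻ ω, ENNReal.ofReal (E p.1 ω) ∂P) * ENNReal.ofReal M := by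
      intro p
      have hi : Indep (pastSigma ζ n) (jumpSigma ζ (n, p)) P := by
        have := indep_iSup_of_disjoint hmsle hind
          (S := {p : ℕ × Fin N × Fin 2 | p.1 < n}) (T := {(n, p)}) (by simp)
        simpa [pastSigma] using this
      have hFm : Measurable[jumpSigma ζ (n, p)] (fun ω => ENNReal.ofReal (F p ω)) := by
        refine Measurable.ennreal_ofReal ?_
        refine Real.measurable_exp.comp ?_
        exact (((measurable_smallv c).comp (comap_measurable (ζ n p.1 p.2)))).const_mul θ
      have h2 := lintegral_mul_eq_lintegral_mul_lintegral_of_independent_measurableSpace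
        hm1le (hmsle (n, p)) hi (hE1 p.1) hFm
      have h3 : ∫⁻ ω, ENNReal.ofReal (F p ω) ∂P =
          ∫⁻ ω, ENNReal.ofReal (Real.exp (θ * smallv c (X ω))) ∂P := by
        have hg : Measurable fun x : ℝ => ENNReal.ofReal (Real.exp (θ * smallv c x)) :=
          (Real.measurable_exp.comp ((measurable_smallv c).const_mul θ)).ennreal_ofReal
        have := lintegral_map (μ := P) hg (hmeas n p.1 p.2)
        rw [hdist, lintegral_map hg hXmeas] at this
        exact this.symm
      calc ∫⁻ ω, ENNReal.ofReal (E p.1 ω * F p ω) ∂P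
          = ∫⁻ ω, ((fun ω => ENNReal.ofReal (E p.1 ω)) * (fun ω => ENNReal.ofReal (F p ω))) ω ∂P := by
            refine lintegral_congr fun ω => ?_
            rw [Pi.mul_apply, ENNReal.ofReal_mul (Real.exp_pos _).le]
        _ = _ := h2
        _ ≤ _ := by
          rw [h3]; gcongr
    calc ∫⁻ ω, ENNReal.ofReal (expFun N θ c (fun k i j => ζ k i j ω) (n + 1)) ∂P
        ≤ ∫⁻ ω, ∑ p : Fin N × Fin 2, ENNReal.ofReal (E p.1 ω * F p ω) ∂P := by
          refine lintegral_mono fun ω => ?_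
          rw [← ENNReal.ofReal_sum_of_nonneg
            (fun p _ => mul_nonneg (Real.exp_pos _).le (Real.exp_pos _).le)]
          exact ENNReal.ofReal_le_ofReal
            (expFun_succ θ c hθ (fun k i j => ζ k i j ω) (fun k i j => hpos k i j ω) n)
      _ = ∑ p : Fin N × Fin 2, ∫⁻ ω, ENNReal.ofReal (E p.1 ω * F p ω) ∂P := by
          refine lintegral_finsetSum _ fun p _ => ?_
          have h4 : Measurable (F p) := 
            (Real.measurable_exp.comp (((measurable_smallv c).comp (hmeas n p.1 p.2)).const_mul θ))
          have h5 : Measurable (E p.1) := Real.measurable_exp.comp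
            (((measurable_brw n (fun k _ => hmeas k) p.1).sub
              (measurable_bigSum c n (fun k _ => hmeas k))).const_mul θ)
          exact (h5.mul h4).ennreal_ofReal
      _ ≤ ∑ p : Fin N × Fin 2, (∫⁻ ω, ENNReal.ofReal (E p.1 ω) ∂P) * ENNReal.ofReal M :=
          Finset.sum_le_sum fun p _ => hprod p
      _ = (∫⁻ ω, ENNReal.ofReal (expFun N θ c (fun k i j => ζ k i j ω) n) ∂P) *
            (2 * ENNReal.ofReal M) := by
          rw [Fintype.sum_prod_type]
          simp only [Finset.sum_const, Finset.card_univ, Fintype.card_fin, nsmul_eq_mul]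
          rw [← Finset.mul_sum, ← Finset.sum_mul,
            ← lintegral_finsetSum (μ := P) _ (fun i _ => hEm i)]
          have h6 : ∀ ω, ENNReal.ofReal (expFun N θ c (fun k i j => ζ k i j ω) n) =
              ∑ i, ENNReal.ofReal (E i ω) := fun ω =>
            ENNReal.ofReal_sum_of_nonneg (fun i _ => (Real.exp_pos _).le)
          simp only [h6]
          push_cast
          ring
      _ ≤ ENNReal.ofReal (N * (2 * M) ^ n) * (2 * ENNReal.ofReal M) := by gcongr
      _ = ENNReal.ofReal (N * (2 * M) ^ (n + 1)) := by
          have : (2 : ENNReal) = ENNReal.ofReal 2 := by simp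
          rw [this, ← ENNReal.ofReal_mul (by norm_num), ← ENNReal.ofReal_mul (by positivity)]
          congr 1
          ring

lemma upper_bound (hXmeas : Measurable X)
    (hXint : Integrable X P) (hN : 1 ≤ N)
    (hmeas : ∀ n i j, Measurable (ζ n i j))
    (hpos : ∀ n i j ω, 0 ≤ ζ n i j ω)
    (hdist : ∀ n i j, Measure.map (ζ n i j) P = Measure.map X P)
    (hindep : iIndepFun (fun p : ℕ × Fin N × Fin 2 => ζ p.1 p.2.1 p.2.2) P)
    (hv : ∀ᵐ ω ∂P, Tendsto
        (fun n : ℕ => brwMax N (fun k i j => ζ k i j ω) n / n) atTop (nhds v))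
    (θ c : ℝ) (hθ : 0 < θ) (M : ℝ) (hM1 : 1 ≤ M)
    (hM : ∫⁻ ω, ENNReal.ofReal (Real.exp (θ * smallv c (X ω))) ∂P ≤ ENNReal.ofReal M) :
    v ≤ 2 * N * (∫ ω, bigv c (X ω) ∂P) + Real.log (2 * M) / θ := by
  have hid : ∀ n i j, IdentDistrib (ζ n i j) X P P := fun n i j =>
    ⟨(hmeas n i j).aemeasurable, hXmeas.aemeasurable, hdist n i j⟩
  have hInteg : ∀ n i j, Integrable (ζ n i j) P := fun n i j => (hid n i j).integrable_iff.2 hXint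
  have hne : Nonempty (Fin N) := ⟨⟨0, hN⟩⟩
  have hN0 : (1 : ℝ) ≤ N := by exact_mod_cast hN
  set e := ∫ ω, bigv c (X ω) ∂P with he
  have hbv : ∀ k i j, Integrable (fun ω => bigv c (ζ k i j ω)) P :=
    fun k i j => integrable_bigv (hmeas _ _ _) (hpos _ _ _) (hInteg _ _ _) c
  have hbve : ∀ k i j, ∫ ω, bigv c (ζ k i j ω) ∂P = e :=
    fun k i j => ((hid k i j).comp (measurable_bigv c)).integral_eq
  have he0 : 0 ≤ e := by
    rw [← hbve 0 ⟨0, hN⟩ 0]; exact integral_nonneg fun ω => bigv_nonneg (hpos _ _ _ _)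
  set B : ℕ → Ω → ℝ := fun n ω => bigSum N c (fun k i j => ζ k i j ω) n with hB
  have hB0 : ∀ n ω, 0 ≤ B n ω := fun n ω => Finset.sum_nonneg fun k _ =>
    Finset.sum_nonneg fun p _ => bigv_nonneg (hpos _ _ _ _)
  have hBint : ∀ n, Integrable (B n) P := fun n =>
    integrable_finsetSum _ fun k _ => integrable_finsetSum _ fun p _ => hbv _ _ _
  have hBe : ∀ n, ∫ ω, B n ω ∂P = n * (2 * N * e) := by
    intro n
    have h1 : ∫ ω, B n ω ∂P = ∑ k ∈ Finset.range n,
        ∫ ω, ∑ p : Fin N × Fin 2, bigv c (ζ k p.1 p.2 ω) ∂P :=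
      integral_finsetSum _ fun k _ => integrable_finsetSum _ fun p _ => hbv _ _ _
    have h2 : ∀ k, ∫ ω, ∑ p : Fin N × Fin 2, bigv c (ζ k p.1 p.2 ω) ∂P = 2 * N * e := by
      intro k
      rw [integral_finsetSum _ fun p _ => hbv _ _ _]
      simp only [hbve]
      rw [Finset.sum_const, nsmul_eq_mul]
      simp only [Finset.card_univ, Fintype.card_prod, Fintype.card_fin]
      push_cast
      ring
    rw [h1]
    simp only [h2]
    simp
  set φ : ℕ → Ω → ℝ := fun n ω => expFun N θ c (fun k i j => ζ k i j ω) n with hφ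
  set a : ℕ → ℝ := fun n => N * (2 * M) ^ n with ha
  have ha1 : ∀ n, 1 ≤ a n := fun n => by
    have : (1 : ℝ) ≤ (2 * M) ^ n := one_le_pow₀ (by linarith)
    simp only [ha]; nlinarith
  have hφ0 : ∀ n ω, 0 < φ n ω := fun n ω =>
    Finset.sum_pos (fun i _ => Real.exp_pos _) Finset.univ_nonempty
  have hLa : ∀ n, Real.log (a n) = Real.log N + n * Real.log (2 * M) := by
    intro n
    rw [ha]
    simp only
    rw [Real.log_mul (by positivity) (by positivity), Real.log_pow]
  have hpt : ∀ n ω, brwMax N (fun k i j => ζ k i j ω) n ≤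
      B n ω + (Real.log (a n) / θ + φ n ω / (a n * θ)) := by
    intro n ω
    refine ciSup_le fun i => ?_
    have h1 : Real.exp (θ * (brw N (fun _ => 0) (fun k i j => ζ k i j ω) n i - B n ω)) ≤ φ n ω :=
      Finset.single_le_sum (f := fun i => Real.exp (θ * (brw N (fun _ => 0)
        (fun k i j => ζ k i j ω) n i - B n ω))) (fun i _ => (Real.exp_pos _).le) (Finset.mem_univ i)
    have h2 := Real.log_le_log (Real.exp_pos _) h1
    rw [Real.log_exp] at h2
    have hap : 0 < a n := by linarith [ha1 n]
    have h3 := Real.log_le_sub_one_of_pos (div_pos (hφ0 n ω) hap)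
    rw [Real.log_div (hφ0 n ω).ne' hap.ne'] at h3
    have h4 : θ * (brw N (fun _ => 0) (fun k i j => ζ k i j ω) n i - B n ω) ≤
      Real.log (a n) + φ n ω / a n := by linarith
    have h5 : Real.log (a n) / θ + φ n ω / (a n * θ) = (Real.log (a n) + φ n ω / a n) / θ := by
      field_simp
    rw [h5, ← sub_le_iff_le_add', le_div_iff₀ hθ]
    linarith
  -- the expectation bound
  set K : ℕ → ℝ := fun n => 2 * N * e + ((Real.log N / θ + 1 / θ) / n + Real.log (2 * M) / θ) with hK
  have hlogM : 0 ≤ Real.log (2 * M) := Real.log_nonneg (by linarith)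
  have hlogN : 0 ≤ Real.log N := Real.log_nonneg hN0
  have hexp : ∀ n : ℕ, 1 ≤ n → ∫⁻ ω, ENNReal.ofReal (brwMax N (fun k i j => ζ k i j ω) n / n) ∂P ≤
      ENNReal.ofReal (K n) := by
    intro n hn
    have hn0 : (0 : ℝ) < n := by exact_mod_cast hn
    have hap : 0 < a n := by linarith [ha1 n]
    have hla : 0 ≤ Real.log (a n) := Real.log_nonneg (ha1 n)
    have hBm : Measurable (B n) := measurable_bigSum c n (fun k _ => hmeas k)
    calc ∫⁻ ω, ENNReal.ofReal (brwMax N (fun k i j => ζ k i j ω) n / n) ∂P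
        ≤ ∫⁻ ω, (ENNReal.ofReal (B n ω / n) + (ENNReal.ofReal (Real.log (a n) / θ / n) +
            ENNReal.ofReal (φ n ω) * ENNReal.ofReal (1 / (a n * θ * n)))) ∂P := by
          refine lintegral_mono fun ω => ?_
          rw [← ENNReal.ofReal_mul (hφ0 n ω).le, ← ENNReal.ofReal_add (by positivity)
            (mul_nonneg (hφ0 n ω).le (by positivity)),
            ← ENNReal.ofReal_add (div_nonneg (hB0 n ω) hn0.le) (add_nonneg (by positivity)
            (mul_nonneg (hφ0 n ω).le (by positivity)))]
          apply ENNReal.ofReal_le_ofReal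
          have h6 := div_le_div_of_nonneg_right (hpt n ω) hn0.le
          refine h6.trans (le_of_eq ?_)
          field_simp
      _ = ENNReal.ofReal (2 * N * e) + (ENNReal.ofReal (Real.log (a n) / θ / n) +
            (∫⁻ ω, ENNReal.ofReal (φ n ω) ∂P) * ENNReal.ofReal (1 / (a n * θ * n))) := by
          rw [lintegral_add_left (hBm.div_const _).ennreal_ofReal,
            lintegral_add_left measurable_const,
            lintegral_mul_const _ (measurable_expFun θ c n hmeas).ennreal_ofReal,
            ← ofReal_integral_eq_lintegral_ofReal ((hBint n).div_const _)
              (ae_of_all _ fun ω => div_nonneg (hB0 n ω) hn0.le), integral_div, hBe]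
          simp only [lintegral_const, measure_univ, mul_one]
          congr 2
          field_simp
      _ ≤ ENNReal.ofReal (2 * N * e) + (ENNReal.ofReal (Real.log (a n) / θ / n) +
            ENNReal.ofReal (a n) * ENNReal.ofReal (1 / (a n * θ * n))) := by
          gcongr
          exact lintegral_expFun hXmeas hmeas hpos hdist hindep θ c hθ.le M (by linarith) hM n
      _ = ENNReal.ofReal (K n) := by
          rw [← ENNReal.ofReal_mul hap.le, ← ENNReal.ofReal_add (by positivity) (by positivity),
            ← ENNReal.ofReal_add (by positivity) (by positivity)]
          congr 1
          rw [hLa, hK]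
          field_simp
          ring
  have hKlim : Tendsto (fun n : ℕ => K (n + 1)) atTop
      (nhds (2 * N * e + Real.log (2 * M) / θ)) := by
    have h7 : Tendsto K atTop (nhds (2 * N * e + (0 + Real.log (2 * M) / θ))) :=
      tendsto_const_nhds.add ((tendsto_const_div_atTop_nhds_zero_nat _).add tendsto_const_nhds)
    rw [zero_add] at h7
    exact h7.comp (tendsto_add_atTop_nat 1)
  have hfat := lintegral_liminf_le' (μ := P) (u := atTop)
    (f := fun (n : ℕ) ω => ENNReal.ofReal (brwMax N (fun k i j => ζ k i j ω) (n + 1) / (n + 1 : ℕ)))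
    (fun n => ((measurable_brwMax hmeas (n + 1)).div_const _).ennreal_ofReal.aemeasurable)
  have hl : ∫⁻ ω, liminf (fun n : ℕ => ENNReal.ofReal
      (brwMax N (fun k i j => ζ k i j ω) (n + 1) / (n + 1 : ℕ))) atTop ∂P = ENNReal.ofReal v := by
    have hc : ∫⁻ _ : Ω, ENNReal.ofReal v ∂P = ENNReal.ofReal v := by simp
    rw [← hc]
    apply lintegral_congr_ae
    filter_upwards [hv] with ω hω
    exact ((ENNReal.continuous_ofReal.tendsto _).comp
      (hω.comp (tendsto_add_atTop_nat 1))).liminf_eq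
  rw [hl] at hfat
  have hr : liminf (fun n : ℕ => ∫⁻ ω, ENNReal.ofReal
      (brwMax N (fun k i j => ζ k i j ω) (n + 1) / (n + 1 : ℕ)) ∂P) atTop ≤
      ENNReal.ofReal (2 * N * e + Real.log (2 * M) / θ) := by
    rw [← ((ENNReal.continuous_ofReal.tendsto _).comp hKlim).liminf_eq]
    exact liminf_le_liminf (Eventually.of_forall fun n => hexp (n + 1) (by omega))
  exact (ENNReal.ofReal_le_ofReal_iff (by positivity)).1 (hfat.trans hr)

end probU

/-! ### Regular variation -/

section rv
variable {t : ℝ → ℝ}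

lemma rv_inv (hpos : ∀ x, 0 < t x)
    (hrv : ∀ l : ℝ, 0 < l → Tendsto (fun x => t x / t (l * x)) atTop (nhds l))
    (l : ℝ) (hl : 0 < l) : Tendsto (fun x => t (l * x) / t x) atTop (nhds l⁻¹) := by
  refine ((hrv l hl).inv₀ hl.ne').congr fun x => ?_
  rw [inv_div]

lemma ell_split (hInteg : IntegrableOn t (Set.Ioi 0)) {a b : ℝ} (ha : 0 ≤ a) (hab : a ≤ b) :
    ∫ x in Set.Ioi a, t x = (∫ x in Set.Ioc a b, t x) + ∫ x in Set.Ioi b, t x := by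
  rw [← Set.Ioc_union_Ioi_eq_Ioi hab]
  apply setIntegral_union
  · rw [Set.disjoint_left]
    intro x hx hx'
    exact absurd hx.2 (not_le.2 hx')
  · exact measurableSet_Ioi
  · exact hInteg.mono_set fun x hx => lt_of_le_of_lt ha hx.1
  · exact hInteg.mono_set fun x hx => lt_of_le_of_lt (ha.trans hab) hx

lemma ell_lower (hanti : Antitone t) (hInteg : IntegrableOn t (Set.Ioi 0)) {a b : ℝ} (ha : 0 ≤ a)
    (hab : a ≤ b) :
    (b - a) * t b + ∫ x in Set.Ioi b, t x ≤ ∫ x in Set.Ioi a, t x := by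
  rw [ell_split hInteg ha hab]
  have : ∫ x in Set.Ioc a b, t b ≤ ∫ x in Set.Ioc a b, t x := by
    apply setIntegral_mono_on
    · exact integrableOn_const (by simp)
    · exact hInteg.mono_set fun x hx => lt_of_le_of_lt ha hx.1
    · exact measurableSet_Ioc
    · intro x hx; exact hanti hx.2
  rw [setIntegral_const] at this
  simp only [Real.volume_real_Ioc_of_le hab, smul_eq_mul] at this
  linarith

lemma ell_upper (hanti : Antitone t) (hInteg : IntegrableOn t (Set.Ioi 0)) {a b : ℝ} (ha : 0 ≤ a)
    (hab : a ≤ b) :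
    ∫ x in Set.Ioi a, t x ≤ (b - a) * t a + ∫ x in Set.Ioi b, t x := by
  rw [ell_split hInteg ha hab]
  have : ∫ x in Set.Ioc a b, t x ≤ ∫ x in Set.Ioc a b, t a := by
    apply setIntegral_mono_on
    · exact hInteg.mono_set fun x hx => lt_of_le_of_lt ha hx.1
    · exact integrableOn_const (by simp)
    · exact measurableSet_Ioc
    · intro x hx; exact hanti hx.1.le
  rw [setIntegral_const] at this
  simp only [Real.volume_real_Ioc_of_le hab, smul_eq_mul] at this
  linarith

lemma ell_big (hanti : Antitone t) (hpos : ∀ x, 0 < t x)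
    (hrv : ∀ l : ℝ, 0 < l → Tendsto (fun x => t x / t (l * x)) atTop (nhds l))
    (hInteg : IntegrableOn t (Set.Ioi 0)) (K : ℕ) :
    ∀ᶠ x in atTop, (K / 4 : ℝ) * (x * t x) ≤ ∫ y in Set.Ioi x, t y := by
  induction K with
  | zero =>
    filter_upwards with x
    simp only [Nat.cast_zero, zero_div, zero_mul]
    exact integral_nonneg fun y => (hpos y).le
  | succ K ih =>
    have h2 : Tendsto (fun x : ℝ => 2 * x) atTop atTop :=
      tendsto_id.const_mul_atTop (by norm_num : (0:ℝ) < 2)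
    have ih2 := h2.eventually ih
    have hr := rv_inv hpos hrv 2 (by norm_num)
    have hε : (2:ℝ)⁻¹ - 1 / (4 * (1 + K / 2)) < 2⁻¹ := by
      have : (0:ℝ) < 1 / (4 * (1 + K / 2)) := by positivity
      linarith
    filter_upwards [ih2, hr.eventually_const_lt hε, eventually_gt_atTop 0] with x h3 h4 hx
    have h5 := ell_lower hanti hInteg hx.le (by linarith : x ≤ 2 * x)
    rw [lt_div_iff₀ (hpos x)] at h4
    have h6 : (x * (1 + K / 2)) * (((2:ℝ)⁻¹ - 1 / (4 * (1 + K / 2))) * t x) ≤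
        (x * (1 + K / 2)) * t (2 * x) :=
      mul_le_mul_of_nonneg_left h4.le (by positivity)
    have h7 : (x * (1 + K / 2)) * (((2:ℝ)⁻¹ - 1 / (4 * (1 + K / 2))) * t x) =
        ((K + 1 : ℕ) / 4 : ℝ) * (x * t x) := by
      push_cast
      field_simp
      ring
    rw [← h7]
    refine h6.trans ?_
    nlinarith

lemma kappa_tendsto (hanti : Antitone t) (hpos : ∀ x, 0 < t x)
    (hrv : ∀ l : ℝ, 0 < l → Tendsto (fun x => t x / t (l * x)) atTop (nhds l))
    (hInteg : IntegrableOn t (Set.Ioi 0)) :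
    Tendsto (fun x => x * t x / ∫ y in Set.Ioi x, t y) atTop (nhds 0) := by
  rw [Metric.tendsto_nhds]
  intro ε hε
  obtain ⟨K, hK⟩ := exists_nat_gt (4 / ε)
  have hK0 : (0:ℝ) < K := lt_trans (by positivity) hK
  filter_upwards [ell_big hanti hpos hrv hInteg K, eventually_gt_atTop 0] with x h1 hx
  have hxt : 0 < x * t x := mul_pos hx (hpos x)
  have hl : 0 < ∫ y in Set.Ioi x, t y := lt_of_lt_of_le (by positivity) h1
  rw [Real.dist_eq, sub_zero, abs_of_pos (div_pos hxt hl), div_lt_iff₀ hl]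
  rw [div_lt_iff₀ hε] at hK
  nlinarith

lemma tail_ge_sq (hanti : Antitone t) (hpos : ∀ x, 0 < t x)
    (hrv : ∀ l : ℝ, 0 < l → Tendsto (fun x => t x / t (l * x)) atTop (nhds l)) :
    ∃ C > 0, ∀ᶠ x in atTop, C ≤ x ^ 2 * t x := by
  have hr := rv_inv hpos hrv 2 (by norm_num)
  have h1 := hr.eventually_const_lt (by norm_num : (1/4 : ℝ) < 2⁻¹)
  obtain ⟨x1, hx1⟩ := eventually_atTop.1 h1
  set x0 := max x1 1 with hx0
  have hx01 : 1 ≤ x0 := le_max_right _ _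
  have hstep : ∀ x, x0 ≤ x → t x / 4 ≤ t (2 * x) := by
    intro x hx
    have := hx1 x ((le_max_left _ _).trans hx)
    rw [lt_div_iff₀ (hpos x)] at this
    linarith
  refine ⟨x0 ^ 2 * t (2 * x0), by have := hpos (2 * x0); positivity, ?_⟩
  have key : ∀ n : ℕ, ∀ x, x0 ≤ x → x ≤ 2 ^ n * x0 → x0 ^ 2 * t (2 * x0) ≤ x ^ 2 * t x := by
    intro n
    induction n with
    | zero =>
      intro x h2 h3
      have h4 : t (2 * x0) ≤ t x := hanti (by simp at h3; linarith)
      exact mul_le_mul (by gcongr) h4 (hpos _).le (by positivity)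
    | succ n ih =>
      intro x h2 h3
      by_cases hx : x ≤ 2 * x0
      · have h4 : t (2 * x0) ≤ t x := hanti hx
        exact mul_le_mul (by gcongr) h4 (hpos _).le (by positivity)
      · push Not at hx
        have h4 := ih (x / 2) (by linarith) (by rw [pow_succ] at h3; linarith)
        have h5 := hstep (x / 2) (by linarith)
        rw [mul_div_cancel₀ x (two_ne_zero)] at h5
        have h6 : x ^ 2 * (t (x / 2) / 4) ≤ x ^ 2 * t x :=
          mul_le_mul_of_nonneg_left h5 (by positivity)
        refine h4.trans (le_trans (le_of_eq ?_) h6)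
        ring
  filter_upwards [eventually_ge_atTop x0] with x hx
  obtain ⟨n, hn⟩ := pow_unbounded_of_one_lt (x / x0) (by norm_num : (1:ℝ) < 2)
  refine key n x hx ?_
  rw [div_lt_iff₀ (by linarith)] at hn
  exact hn.le

end rv

section tl
variable {Ω : Type*} [MeasurableSpace Ω] {P : Measure Ω} [IsProbabilityMeasure P] {X : Ω → ℝ}

lemma tail_antitone : Antitone (tail P X) := by
  intro x y hxy
  unfold tail
  apply ENNReal.toReal_mono (measure_ne_top _ _)
  exact measure_mono fun ω (h : y < X ω) => lt_of_le_of_lt hxy h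

lemma tail_nonneg (x : ℝ) : 0 ≤ tail P X x := ENNReal.toReal_nonneg

lemma tail_pos (hRV : ∀ l : ℝ, 0 < l →
      Tendsto (fun x => tail P X x / tail P X (l * x)) atTop (nhds l)) (x : ℝ) :
    0 < tail P X x := by
  have h1 := (hRV 1 one_pos).eventually_const_lt one_half_lt_one
  obtain ⟨y, hy, hxy⟩ := (h1.and (eventually_ge_atTop x)).exists
  rcases (tail_nonneg (P := P) (X := X) y).eq_or_lt with h | h
  · simp [← h] at hy
    linarith
  · exact h.trans_le (tail_antitone hxy)

lemma tail_le_of_right (c b : ℝ) (h : ∀ x, c < x → tail P X x ≤ b) :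
    tail P X c ≤ b := by
  have hU : {ω | c < X ω} = ⋃ n : ℕ, {ω | c + 1 / ((n : ℝ) + 1) < X ω} := by
    ext ω
    simp only [Set.mem_setOf_eq, Set.mem_iUnion]
    constructor
    · intro hω
      obtain ⟨n, hn⟩ := exists_nat_one_div_lt (sub_pos.2 hω)
      exact ⟨n, by linarith⟩
    · rintro ⟨n, hn⟩
      have : (0:ℝ) < 1 / ((n : ℝ) + 1) := by positivity
      linarith
  have hmono : Monotone fun n : ℕ => {ω | c + 1 / ((n : ℝ) + 1) < X ω} := by
    intro n m hnm ω hω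
    simp only [Set.mem_setOf_eq] at hω ⊢
    have : 1 / ((m : ℝ) + 1) ≤ 1 / ((n : ℝ) + 1) := by
      have : (n:ℝ) ≤ m := by exact_mod_cast hnm
      gcongr
    linarith
  have ht := tendsto_measure_iUnion_atTop (μ := P) hmono
  rw [← hU] at ht
  have ht2 := (ENNReal.tendsto_toReal (measure_ne_top P _)).comp ht
  refine le_of_tendsto ht2 (Eventually.of_forall fun n => ?_)
  apply h
  have : (0:ℝ) < 1 / ((n : ℝ) + 1) := by positivity
  linarith

lemma integrableOn_tail (hXmeas : Measurable X) (hXpos : ∀ ω, 0 ≤ X ω) (hXint : Integrable X P) :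
    IntegrableOn (tail P X) (Set.Ioi 0) := by
  refine ⟨(tail_antitone (P := P) (X := X)).measurable.aestronglyMeasurable, ?_⟩
  rw [hasFiniteIntegral_iff_ofReal (ae_of_all _ fun x => tail_nonneg x)]
  have h1 := lintegral_eq_lintegral_meas_lt P (ae_of_all _ hXpos) hXmeas.aemeasurable
  have h2 : ∫⁻ a in Set.Ioi 0, ENNReal.ofReal (tail P X a) = ∫⁻ ω, ENNReal.ofReal (X ω) ∂P := by
    rw [h1]
    refine lintegral_congr fun a => ?_
    exact ENNReal.ofReal_toReal (measure_ne_top _ _)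
  rw [h2]
  exact (hasFiniteIntegral_iff_ofReal (ae_of_all _ hXpos)).1 hXint.2

lemma integral_bigv (hXmeas : Measurable X) (hXpos : ∀ ω, 0 ≤ X ω) (hXint : Integrable X P)
    (A : ℝ) (hA : 0 ≤ A) :
    ∫ ω, bigv A (X ω) ∂P = A * tail P X A + ∫ x in Set.Ioi A, tail P X x := by
  have hI := integrableOn_tail hXmeas hXpos hXint
  have h1 := (integrable_bigv hXmeas hXpos hXint A).integral_eq_integral_meas_lt
    (ae_of_all _ fun ω => bigv_nonneg (hXpos ω))
  rw [h1]
  have hset : ∀ s, 0 < s → P.real {a | s < bigv A (X a)} = tail P X (max s A) := by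
    intro s hs
    unfold tail
    rw [Measure.real]
    congr 2
    ext ω
    simp only [Set.mem_setOf_eq, bigv, max_lt_iff]
    split_ifs with h
    · simp [h]
    · simp only [h, and_false, iff_false, not_lt]; exact hs.le
  rw [setIntegral_congr_fun measurableSet_Ioi (g := fun s => tail P X (max s A))
    (fun s hs => hset s hs)]
  have hint2 : IntegrableOn (fun s => tail P X (max s A)) (Set.Ioi 0) := by
    refine Integrable.mono' hI ?_ ?_
    · exact ((tail_antitone (P := P) (X := X)).measurable.comp
        (measurable_id.max measurable_const)).aestronglyMeasurable
    · refine ae_of_all _ fun s => ?_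
      rw [Real.norm_eq_abs, abs_of_nonneg (tail_nonneg _)]
      exact tail_antitone (le_max_left _ _)
  rw [ell_split hint2 le_rfl hA]
  congr 1
  · rw [setIntegral_congr_fun measurableSet_Ioc (g := fun _ => tail P X A)
      (fun s hs => by simp only [max_eq_right hs.2])]
    rw [setIntegral_const]
    simp [hA]
  · exact setIntegral_congr_fun measurableSet_Ioi
      (fun s hs => by simp only [max_eq_left (Set.mem_Ioi.1 hs).le])

lemma mgf_bound (hXmeas : Measurable X) (hXpos : ∀ ω, 0 ≤ X ω) (hXint : Integrable X P)
    (θ c : ℝ) (hθ : 0 ≤ θ) (hc : 0 ≤ c) :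
    ∫⁻ ω, ENNReal.ofReal (Real.exp (θ * smallv c (X ω))) ∂P ≤
      ENNReal.ofReal (1 + θ * Real.exp (θ * c) * ∫ ω, X ω ∂P) := by
  have hInteg : Integrable (fun ω => 1 + θ * Real.exp (θ * c) * X ω) P :=
    (integrable_const _).add (hXint.const_mul _)
  have h1 : 1 + θ * Real.exp (θ * c) * ∫ ω, X ω ∂P =
      ∫ ω, (1 + θ * Real.exp (θ * c) * X ω) ∂P := by
    rw [integral_add (integrable_const _) (hXint.const_mul _), integral_const_mul]
    simp
  rw [h1, ofReal_integral_eq_lintegral_ofReal hInteg (ae_of_all _ fun ω => by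
    have := hXpos ω; positivity)]
  refine lintegral_mono fun ω => ENNReal.ofReal_le_ofReal ?_
  have hs : 0 ≤ smallv c (X ω) ∧ smallv c (X ω) ≤ c ∧ smallv c (X ω) ≤ X ω := by
    have := hXpos ω
    unfold smallv bigv
    split_ifs with h
    · simp [hc, this]
    · push Not at h; simp [h, this]
  set y := θ * smallv c (X ω) with hy
  have hy0 : 0 ≤ y := mul_nonneg hθ hs.1
  have h2 : Real.exp y ≤ 1 + y * Real.exp y := by
    have h3 := Real.add_one_le_exp (-y)
    have h4 : Real.exp (-y) * Real.exp y = 1 := by rw [← Real.exp_add]; simp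
    nlinarith [Real.exp_pos y]
  have h5 : y * Real.exp y ≤ (θ * X ω) * Real.exp (θ * c) := by
    apply mul_le_mul
    · exact mul_le_mul_of_nonneg_left hs.2.2 hθ
    · exact Real.exp_le_exp.2 (mul_le_mul_of_nonneg_left hs.2.1 hθ)
    · exact (Real.exp_pos _).le
    · exact mul_nonneg hθ (hXpos ω)
  linarith

/-! ### Properties of `c_N` -/

lemma hinv_spec (hXmeas : Measurable X) (y : ℝ) (hy : 0 < y) :
    0 ≤ hinv P X y ∧ tail P X (hinv P X y) ≤ y⁻¹ ∧
      ∀ x, 0 ≤ x → x < hinv P X y → y⁻¹ < tail P X x := by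
  have hb : BddBelow {x : ℝ | 0 ≤ x ∧ tail P X x ≤ y⁻¹} := ⟨0, fun x hx => hx.1⟩
  have htend : Tendsto (fun n : ℕ => tail P X n) atTop (nhds 0) := by
    have hm : Antitone fun n : ℕ => {ω | (n : ℝ) < X ω} := by
      intro n m hnm ω (hω : (m:ℝ) < X ω)
      exact lt_of_le_of_lt (by exact_mod_cast hnm) hω
    have h1 := tendsto_measure_iInter_atTop (μ := P)
      (fun n : ℕ => (measurableSet_lt (measurable_const (a := (n:ℝ))) hXmeas).nullMeasurableSet)
      hm ⟨0, measure_ne_top _ _⟩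
    have h2 : (⋂ n : ℕ, {ω | (n : ℝ) < X ω}) = ∅ := by
      ext ω
      simp only [Set.mem_iInter, Set.mem_setOf_eq, Set.mem_empty_iff_false, iff_false, not_forall,
        not_lt]
      exact exists_nat_ge (X ω)
    rw [h2, measure_empty] at h1
    simpa [tail, Function.comp_def] using (ENNReal.tendsto_toReal (by simp)).comp h1
  have hne : {x : ℝ | 0 ≤ x ∧ tail P X x ≤ y⁻¹}.Nonempty := by
    obtain ⟨n, hn⟩ := (htend.eventually_lt_const (inv_pos.2 hy)).exists
    exact ⟨n, Nat.cast_nonneg _, hn.le⟩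
  refine ⟨le_csInf hne fun x hx => hx.1, ?_, ?_⟩
  · apply tail_le_of_right
    intro x hx
    obtain ⟨z, hz, hzx⟩ := exists_lt_of_csInf_lt hne hx
    exact (tail_antitone hzx.le).trans hz.2
  · intro x hx hlt
    by_contra! h
    exact absurd (csInf_le hb ⟨hx, h⟩) (not_le.2 hlt)

end tl


section final

lemma y_tendsto : Tendsto (fun N : ℕ => 2 * (N : ℝ) * Real.logb 2 N) atTop atTop := by
  have h1 : Tendsto (fun N : ℕ => Real.logb 2 N) atTop atTop :=
    (Real.tendsto_logb_atTop (by norm_num)).comp tendsto_natCast_atTop_atTop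
  have h2 : Tendsto (fun N : ℕ => 2 * (N : ℝ)) atTop atTop :=
    Tendsto.const_mul_atTop (by norm_num) tendsto_natCast_atTop_atTop
  exact h2.atTop_mul_atTop₀ h1

variable {t : ℝ → ℝ} {c y : ℕ → ℝ}

lemma c_tendsto_abs (hanti : Antitone t) (hpos : ∀ x, 0 < t x) (hy : Tendsto y atTop atTop)
    (hcy : ∀ᶠ N in atTop, t (c N) ≤ (y N)⁻¹) : Tendsto c atTop atTop := by
  rw [tendsto_atTop]
  intro b
  have h1 : ∀ᶠ N in atTop, (y N)⁻¹ < t b :=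
    (tendsto_inv_atTop_zero.comp hy).eventually_lt_const (hpos b)
  filter_upwards [h1, hcy] with N h1 h2
  by_contra h
  have := hanti (le_of_lt (not_le.1 h))
  linarith

lemma yt_tendsto_abs (hpos : ∀ x, 0 < t x)
    (hrv : ∀ l : ℝ, 0 < l → Tendsto (fun x => t x / t (l * x)) atTop (nhds l))
    (hy : Tendsto y atTop atTop) (hc : Tendsto c atTop atTop)
    (hcy : ∀ᶠ N in atTop, t (c N) ≤ (y N)⁻¹ ∧ ∀ x, 0 ≤ x → x < c N → (y N)⁻¹ < t x) :
    Tendsto (fun N => y N * t (c N)) atTop (nhds 1) := by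
  rw [tendsto_order]
  constructor
  · intro a ha
    obtain ⟨l, hl, hl1⟩ := exists_between (max_lt ha one_pos)
    have hl0 : 0 < l := lt_of_le_of_lt (le_max_right _ _) hl
    have hal : a < l := lt_of_le_of_lt (le_max_left _ _) hl
    have h1 := ((hrv l hl0).comp hc).eventually_const_lt hal
    filter_upwards [h1, hcy, hc.eventually_gt_atTop 0, hy.eventually_gt_atTop 0] with N h1 h2 h3 h4
    have h5 := h2.2 (l * c N) (by positivity) (by nlinarith)
    simp only [Function.comp] at h1
    refine h1.trans ?_
    rw [div_lt_iff₀ (hpos _)]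
    have h6 : 1 < y N * t (l * c N) := by
      rw [inv_lt_iff_one_lt_mul₀ h4] at h5
      linarith
    nlinarith [hpos (c N)]
  · intro a ha
    filter_upwards [hcy, hy.eventually_gt_atTop 0] with N h2 h4
    have : y N * t (c N) ≤ 1 := by
      have := mul_le_mul_of_nonneg_left h2.1 h4.le
      rwa [mul_inv_cancel₀ h4.ne'] at this
    linarith

lemma D_eq (c L : ℝ) (hc : 0 < c) (hL : 0 < L) (ht : 0 < t c) :
    (c / L) * ∫ x in Set.Ioi (1 : ℝ), t (c * x) / t c =
      (∫ x in Set.Ioi c, t x) / (L * t c) := by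
  rw [integral_div, integral_comp_mul_left_Ioi (fun x => t x) 1 hc]
  simp only [mul_one, smul_eq_mul]
  field_simp

lemma upper_alg {N L t c ell v D : ℝ} (hL : 0 < L) (ht : 0 < t)
    (hell : 0 < ell) (hD : D = ell / (L * t))
    (h : v ≤ 2 * N * (c * t + ell) + 8 * c / L) :
    v / D ≤ (2 * N * L * t) * (c * t / ell + 1) + 8 * (c * t / ell) := by
  subst hD
  rw [div_le_iff₀ (by positivity)]
  refine h.trans (le_of_eq ?_)
  field_simp

lemma lower_alg {N L T t tA c ell e v D lam m : ℝ} (hN : 0 < N) (hL : 0 < L) (ht : 0 < t)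
    (htA : 0 ≤ tA) (hT : 0 < T) (hLT : L ≤ T) (hT2 : T ≤ 2 * L)
    (hell : 0 < ell) (hlam : 1 < lam) (hD : D = ell / (L * t)) (hm : m = (lam - 1) * T * (2 * N))
    (he : ell - (lam ^ 2 - 1) * (c * t) ≤ e) 
    (h1 : 0 ≤ 1 - (lam ^ 2 - 1) * (c * t / ell))
    (h2 : 0 ≤ 1 - 2 * (lam - 1) * (2 * N * L * t) * (tA / t))
    (h : m * e * (1 - m * tA) ≤ lam * T * v) :
    (1 - 1 / lam) * (2 * N * L * t) * (1 - (lam ^ 2 - 1) * (c * t / ell)) *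
      (1 - 2 * (lam - 1) * (2 * N * L * t) * (tA / t)) ≤ v / D := by
  set k := 1 - (lam ^ 2 - 1) * (c * t / ell) with hk
  set r := 1 - 2 * (lam - 1) * (2 * N * L * t) * (tA / t) with hr
  have hl0 : 0 < lam := by linarith
  have hl1 : 0 < lam - 1 := by linarith
  have hke : ell * k ≤ e := by
    refine le_trans (le_of_eq ?_) he
    rw [hk]; field_simp
  have hre : r ≤ 1 - m * tA := by
    have h3 : 2 * (lam - 1) * (2 * N * L * t) * (tA / t) = (lam - 1) * (2 * L) * (2 * N) * tA := by
      field_simp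
    have h4 : m * tA ≤ (lam - 1) * (2 * L) * (2 * N) * tA := by
      rw [hm]; gcongr
    rw [hr, h3]; linarith
  have hm0 : 0 < m := by rw [hm]; positivity
  have h5 : m * (ell * k) * r ≤ lam * T * v := by
    refine le_trans ?_ h
    have : 0 ≤ ell * k := by positivity
    gcongr
    exact mul_nonneg hm0.le (this.trans hke)
  subst hD
  rw [le_div_iff₀ (by positivity)]
  have h6 : (1 - 1 / lam) * (2 * N * L * t) * k * r * (ell / (L * t)) = 
     m * (ell * k) * r / (lam * T) := by
    rw [hm]; field_simp
  rw [h6, div_le_iff₀ (by positivity)]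
  linarith

lemma lam_exists (a : ℝ) (ha : a < 1) : ∃ lam : ℕ, 2 ≤ lam ∧
    a < (1 - 1 / (lam : ℝ)) * (1 - 2 * ((lam : ℝ) - 1) * ((lam : ℝ) ^ 2)⁻¹) ∧
    0 < 1 - 2 * ((lam : ℝ) - 1) * ((lam : ℝ) ^ 2)⁻¹ := by
  obtain ⟨K, hK⟩ := exists_nat_gt (3 / (1 - a))
  refine ⟨K + 4, by omega, ?_, ?_⟩
  all_goals
    push_cast
    set l : ℝ := (K : ℝ) + 4 with hl
    have hl0 : (4:ℝ) ≤ l := by rw [hl]; linarith [(Nat.cast_nonneg K : (0:ℝ) ≤ K)]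
    have h3 : 3 / l < 1 - a := by
      rw [div_lt_iff₀ (by linarith)]
      rw [div_lt_iff₀ (by linarith)] at hK
      nlinarith
    have h4 : 2 * (l - 1) * (l ^ 2)⁻¹ ≤ 2 / l := by
      rw [← div_eq_mul_inv, div_le_div_iff₀ (by positivity) (by positivity)]
      nlinarith
    have h5 : 2 / l ≤ 1 / 2 := by
      rw [div_le_div_iff₀ (by positivity) (by positivity)]
      linarith
  · have h6 : 3 / l = 1 / l + 2 / l := by ring
    have h7 : 0 < 1 / l := by positivity
    have h8 : 0 ≤ 2 * (l - 1) * (l ^ 2)⁻¹ := by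
      have : 0 ≤ l - 1 := by linarith
      positivity
    nlinarith
  · linarith

lemma mgf_cond {N L c E C tc : ℝ} (hN : 2 ≤ N) (hL : L = Real.logb 2 N) (hc : 0 < c) (hE : 0 ≤ E)
    (hC : 0 < C) (h1 : C ≤ c ^ 2 * tc) (h2 : tc ≤ (2 * N * L)⁻¹) (h3 : E ^ 2 ≤ 2 * C * L) :
    Real.log N / (4 * c) * Real.exp (Real.log N / (4 * c) * c) * E ≤ 1 := by
  have hN0 : 0 < N := by linarith
  have hL0 : 0 < L := by rw [hL]; exact Real.logb_pos (by norm_num) (by linarith)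
  have hexp : Real.exp (Real.log N / (4 * c) * c) = N ^ (1/4 : ℝ) := by
    rw [Real.rpow_def_of_pos hN0]; congr 1; field_simp
  have hlog : Real.log N ≤ 4 * N ^ (1/4 : ℝ) := by
    have := Real.log_le_rpow_div hN0.le (ε := 1/4) (by norm_num)
    linarith
  set q := N ^ (1/4 : ℝ) with hq
  have hq0 : 0 < q := by positivity
  have hq4 : q ^ 4 = N := by
    rw [hq, ← Real.rpow_natCast, ← Real.rpow_mul hN0.le]; norm_num
  have hcc : C * (2 * N * L) ≤ c ^ 2 := by
    have h5 : C ≤ c ^ 2 * (2 * N * L)⁻¹ := h1.trans (by gcongr)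
    rw [← div_eq_mul_inv, le_div_iff₀ (by positivity)] at h5
    exact h5
  have hqc : q ^ 2 * E ≤ c := by
    refine abs_le_of_sq_le_sq' ?_ hc.le |>.2
    have : (q ^ 2 * E) ^ 2 = N * E ^ 2 := by rw [← hq4]; ring
    rw [this]
    nlinarith
  rw [hexp]
  have : Real.log N / (4 * c) * q * E ≤ 4 * q / (4 * c) * q * E := by gcongr
  refine this.trans ?_
  have h7 : 4 * q / (4 * c) * q * E = q ^ 2 * E / c := by field_simp
  rw [h7, div_le_one hc]
  exact hqc

lemma clog_bounds (N : ℕ) (hN : 2 ≤ N) :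
    N ≤ 2 ^ Nat.clog 2 N ∧ Real.logb 2 N ≤ Nat.clog 2 N ∧
      (Nat.clog 2 N : ℝ) ≤ 2 * Real.logb 2 N := by
  have h1 : N ≤ 2 ^ Nat.clog 2 N := Nat.le_pow_clog (by norm_num) N
  have hN0 : (0:ℝ) < N := by positivity
  have hL1 : 1 ≤ Real.logb 2 N := by
    rw [Real.le_logb_iff_rpow_le (by norm_num) hN0]
    simpa using (by exact_mod_cast hN : (2:ℝ) ≤ N)
  refine ⟨h1, ?_, ?_⟩
  · rw [Real.logb_le_iff_le_rpow (by norm_num) hN0, Real.rpow_natCast]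
    exact_mod_cast h1
  · have h2 : 2 ^ (Nat.clog 2 N - 1) < N := Nat.pow_pred_clog_lt_self (by norm_num) (by omega)
    have h3 : ((Nat.clog 2 N - 1 : ℕ) : ℝ) ≤ Real.logb 2 N := by
      rw [Real.le_logb_iff_rpow_le (by norm_num) hN0, Real.rpow_natCast]
      exact_mod_cast h2.le
    have h4 : 1 ≤ Nat.clog 2 N := Nat.clog_pos (by norm_num) hN
    push_cast [h4] at h3
    linarith

end final
/-- if `α = 1` and `E[X] < ∞`, then as `N → ∞`,
`v_N ~ (c_N / log₂ N) ∫₁^∞ h(c_N)/h(c_N x) dx`, i.e. the ratio of the two sides tends to `1`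
(note `h(c_N)/h(c_N x) = P(X > c_N x)/P(X > c_N)`). Here `v_N` is the almost-sure limit of
`X_N(n)/n` and of `X_1(n)/n` for the `N`-particle system. -/
theorem stmt_15 {Ω : Type*} [MeasurableSpace Ω] (P : Measure Ω) [IsProbabilityMeasure P]
    (X : Ω → ℝ) (hXmeas : Measurable X) (hXpos : ∀ ω, 0 ≤ X ω)
    (hXint : Integrable X P)
    (hRV : ∀ l : ℝ, 0 < l →
      Tendsto (fun x => tail P X x / tail P X (l * x)) atTop (nhds (l ^ (1 : ℝ))))
    (ξ : (N : ℕ) → ℕ → Fin N → Fin 2 → Ω → ℝ)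
    (hξmeas : ∀ N n i j, Measurable (ξ N n i j))
    (hξpos : ∀ N n i j ω, 0 ≤ ξ N n i j ω)
    (hξdist : ∀ N n i j, Measure.map (ξ N n i j) P = Measure.map X P)
    (hξindep : ∀ N, iIndepFun
      (fun p : ℕ × Fin N × Fin 2 => ξ N p.1 p.2.1 p.2.2) P)
    (v : ℕ → ℝ)
    (hv : ∀ N : ℕ, 1 ≤ N →
      (∀ᵐ ω ∂P, Tendsto
        (fun n : ℕ => brwMax N (fun k i j => ξ N k i j ω) n / n) atTop (nhds (v N))) ∧
      (∀ᵐ ω ∂P, Tendsto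
        (fun n : ℕ => brwMin N (fun k i j => ξ N k i j ω) n / n) atTop (nhds (v N)))) :
    Tendsto (fun N : ℕ =>
      v N / ((cN P X N / Real.logb 2 N) *
        ∫ x in Set.Ioi (1 : ℝ), tail P X (cN P X N * x) / tail P X (cN P X N)))
      atTop (nhds 1) := by
  have hrv : ∀ l : ℝ, 0 < l →
      Tendsto (fun x => tail P X x / tail P X (l * x)) atTop (nhds l) := by
    intro l hl
    have := hRV l hl
    rwa [Real.rpow_one] at this
  have hpos : ∀ x, 0 < tail P X x := tail_pos hrv
  have hanti : Antitone (tail P X) := tail_antitone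
  have hInteg : IntegrableOn (tail P X) (Set.Ioi 0) := integrableOn_tail hXmeas hXpos hXint
  have hy := y_tendsto
  have hspec : ∀ᶠ N : ℕ in atTop, tail P X (cN P X N) ≤ (2 * (N : ℝ) * Real.logb 2 N)⁻¹ ∧
      ∀ x, 0 ≤ x → x < cN P X N → (2 * (N : ℝ) * Real.logb 2 N)⁻¹ < tail P X x := by
    filter_upwards [hy.eventually_gt_atTop 0] with N hN
    exact (hinv_spec hXmeas _ hN).2
  have hc : Tendsto (cN P X) atTop atTop :=
    c_tendsto_abs hanti hpos hy (hspec.mono fun N h => h.1)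
  have hyt := yt_tendsto_abs hpos hrv hy hc hspec
  have hkap := (kappa_tendsto hanti hpos hrv hInteg).comp hc
  have hL : Tendsto (fun N : ℕ => Real.logb 2 (N : ℝ)) atTop atTop :=
    (Real.tendsto_logb_atTop (by norm_num)).comp tendsto_natCast_atTop_atTop
  obtain ⟨C, hC, hsq⟩ := tail_ge_sq hanti hpos hrv
  have hell : ∀ a, 0 ≤ a → 0 < ∫ x in Set.Ioi a, tail P X x := by
    intro a ha
    have h1 := ell_lower hanti hInteg ha (by linarith : a ≤ a + 1)
    have h2 : 0 ≤ ∫ x in Set.Ioi (a + 1), tail P X x := integral_nonneg fun x => (hpos x).le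
    have h3 := hpos (a + 1)
    nlinarith
  have hX0 : 0 ≤ ∫ ω, X ω ∂P := integral_nonneg hXpos
  rw [tendsto_order]
  constructor
  · intro a ha
    obtain ⟨lam, hlam2, hlama, hlam0⟩ := lam_exists a ha
    have hl2 : (2 : ℝ) ≤ lam := by exact_mod_cast hlam2
    have hrho := (rv_inv hpos hrv ((lam : ℝ) ^ 2) (by positivity)).comp hc
    have hk1 : Tendsto (fun N => 1 - ((lam : ℝ) ^ 2 - 1) *
        (cN P X N * tail P X (cN P X N) / ∫ x in Set.Ioi (cN P X N), tail P X x)) atTop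
        (nhds (1 - ((lam : ℝ) ^ 2 - 1) * 0)) := tendsto_const_nhds.sub (hkap.const_mul _)
    have hr1 : Tendsto (fun N : ℕ => 1 - 2 * ((lam : ℝ) - 1) *
        (2 * (N : ℝ) * Real.logb 2 N * tail P X (cN P X N)) *
        (tail P X ((lam : ℝ) ^ 2 * cN P X N) / tail P X (cN P X N))) atTop
        (nhds (1 - 2 * ((lam : ℝ) - 1) * 1 * ((lam : ℝ) ^ 2)⁻¹)) :=
      tendsto_const_nhds.sub ((hyt.const_mul _).mul hrho)
    have hall := ((hyt.const_mul (1 - 1 / (lam : ℝ))).mul hk1).mul hr1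
    have hlt : a < (1 - 1 / (lam : ℝ)) * 1 * (1 - ((lam : ℝ) ^ 2 - 1) * 0) *
        (1 - 2 * ((lam : ℝ) - 1) * 1 * ((lam : ℝ) ^ 2)⁻¹) := by
      simpa using hlama
    have e1 := hall.eventually_const_lt hlt
    have e2 := hk1.eventually_const_lt (by norm_num : (0:ℝ) < _)
    have e3 := hr1.eventually_const_lt (by rw [mul_one]; exact hlam0 : (0:ℝ) < _)
    filter_upwards [e1, e2, e3, hc.eventually_gt_atTop 0, eventually_ge_atTop 2]
      with N e1 e2 e3 hc0 hN
    refine e1.trans_le ?_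
    obtain ⟨hT1, hT2, hT3⟩ := clog_bounds N hN
    have hN0 : (0:ℝ) < N := by positivity
    have hL0 : 0 < Real.logb 2 (N : ℝ) :=
      Real.logb_pos (by norm_num) (by exact_mod_cast (by omega : 1 < N))
    have hT0 : (0:ℝ) < Nat.clog 2 N := by linarith
    have hT0n : 1 ≤ Nat.clog 2 N := by exact_mod_cast hT0
    have hTR : Nat.clog 2 N ≤ lam * Nat.clog 2 N := Nat.le_mul_of_pos_left _ (by omega)
    have hlow := lower_bound (v := v N) hXmeas hXint (by omega : 1 ≤ N) (hξmeas N) (hξpos N)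
      (hξdist N) (hξindep N) (hv N (by omega)).2 (lam * Nat.clog 2 N) (Nat.clog 2 N)
      (hT0n.trans hTR) hT1 hTR ((lam : ℝ) ^ 2 * cN P X N) _ rfl
    have hA : cN P X N ≤ (lam : ℝ) ^ 2 * cN P X N :=
      le_mul_of_one_le_left hc0.le (one_le_pow₀ (by linarith))
    have hbig := integral_bigv hXmeas hXpos hXint ((lam : ℝ) ^ 2 * cN P X N) (by positivity)
    have hup := ell_upper hanti hInteg hc0.le hA
    have hm : (((lam * Nat.clog 2 N - Nat.clog 2 N) * (2 * N) : ℕ) : ℝ) =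
        ((lam : ℝ) - 1) * (Nat.clog 2 N) * (2 * N) := by
      push_cast [hTR]
      ring
    have hpA : 0 ≤ (lam : ℝ) ^ 2 * cN P X N * tail P X ((lam : ℝ) ^ 2 * cN P X N) :=
      mul_nonneg (by positivity) (hpos _).le
    refine lower_alg (T := (Nat.clog 2 N : ℝ)) (e := ∫ ω, bigv ((lam : ℝ) ^ 2 * cN P X N) (X ω) ∂P)
      hN0 hL0 (hpos _) (hpos _).le hT0 hT2 hT3 (hell _ hc0.le) (by linarith)
      (D_eq (t := tail P X) _ _ hc0 hL0 (hpos _)) hm ?_ e2.le e3.le ?_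
    · rw [hbig]
      nlinarith
    · push_cast at hlow ⊢
      exact hlow
  · intro a ha
    have hall := (hyt.mul (hkap.add_const 1)).add (hkap.const_mul 8)
    have e1 := hall.eventually_lt_const (by simpa using ha : _ < a)
    filter_upwards [e1, hc.eventually_gt_atTop 0, eventually_ge_atTop 2, hc.eventually hsq, hspec,
      hL.eventually_ge_atTop ((∫ ω, X ω ∂P) ^ 2 / (2 * C))] with N e1 hc0 hN hsq hspec hLb
    refine lt_of_le_of_lt ?_ e1
    have hN2 : (2:ℝ) ≤ N := by exact_mod_cast hN
    have hL0 : 0 < Real.logb 2 (N : ℝ) :=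
      Real.logb_pos (by norm_num) (by linarith)
    have hlog0 : 0 < Real.log (N : ℝ) := Real.log_pos (by linarith)
    have hmc := mgf_cond hN2 rfl hc0 hX0 hC hsq hspec.1
      (by rw [div_le_iff₀ (by positivity)] at hLb; linarith)
    have hM := (mgf_bound hXmeas hXpos hXint (Real.log N / (4 * cN P X N)) (cN P X N)
      (by positivity) hc0.le).trans (ENNReal.ofReal_le_ofReal (by linarith : _ ≤ (2 : ℝ)))
    have hu := upper_bound (v := v N) hXmeas hXint (by omega : 1 ≤ N) (hξmeas N) (hξpos N)
      (hξdist N) (hξindep N) (hv N (by omega)).1 (Real.log N / (4 * cN P X N)) (cN P X N)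
      (by positivity) 2 (by norm_num) hM
    rw [integral_bigv hXmeas hXpos hXint _ hc0.le] at hu
    refine upper_alg hL0 (hpos _) (hell _ hc0.le)
      (D_eq (t := tail P X) _ _ hc0 hL0 (hpos _)) (hu.trans (le_of_eq ?_))
    congr 1
    have h4 : Real.log (2 * 2) = 2 * Real.log 2 := by
      rw [Real.log_mul (by norm_num) (by norm_num)]; ring
    have hl2 : 0 < Real.log 2 := Real.log_pos (by norm_num)
    rw [h4, Real.logb]
    field_simp
    try norm_num

end
end
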